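/- arXiv:1604.07039 — 2 statements merged into one kernel-verified Lean document; each statement's English description precedes it below -/
import Mathlib

section
/- (Lemma 2, part o3) Suppose X^n ⊂ ℝ^d (d ≥ 2) is in general position and M(X^n) has affine dimension d. Let z_1 be a point in the interior of M(X^n) with B̃_{z_1} ≠ ∅. Then for every z ∈ B̃_{z_1} one has B_z ⊆ B_{z_1} and z_1 ∉ B_z; that is, B_z ⊆ B̃_{z_1}. -/
open scoped RealInnerProductSpace
open MeasureTheory

noncomputable section

/-- `E d` is the Euclidean space `ℝ^d`. -/
abbrev E (d : ℕ) : Type := EuclideanSpace ℝ (Fin d)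

/-- A sample `X` of `n` points in `ℝ^d` is in general position if no affine hyperplane
(encoded as `{x | ⟪v, x⟫ = c}` for some `v ≠ 0`) contains more than `d` of the points. -/
def inGeneralPosition {d n : ℕ} (X : Fin n → E d) : Prop :=
  ∀ v : E d, v ≠ 0 → ∀ c : ℝ, ({i : Fin n | ⟪v, X i⟫ = c} : Set (Fin n)).ncard ≤ d

/-- Number of sample points in the closed halfspace `{z | ⟪u, z⟫ ≤ ⟪u, x⟫}`. -/
def sideCount {d n : ℕ} (X : Fin n → E d) (u x : E d) : ℕ :=
  ({i : Fin n | ⟪u, X i⟫ ≤ ⟪u, x⟫} : Set (Fin n)).ncard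

/-- Tukey's halfspace depth of `x` with respect to the sample `X`. -/
def depth {d n : ℕ} (X : Fin n → E d) (x : E d) : ℝ :=
  sInf {r : ℝ | ∃ u : E d, ‖u‖ = 1 ∧ r = (sideCount X u x : ℝ) / (n : ℝ)}

/-- The maximum Tukey depth `λ*` of the sample `X`. -/
def maxDepth {d n : ℕ} (X : Fin n → E d) : ℝ :=
  sSup (Set.range (depth X))

/-- The set `M(X)` of deepest points. -/
def MSet {d n : ℕ} (X : Fin n → E d) : Set (E d) :=
  {x | depth X x = maxDepth X}

/-- `U_x`: the set of optimal (unit) directions realizing the depth at `x`. -/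
def USet {d n : ℕ} (X : Fin n → E d) (x : E d) : Set (E d) :=
  {u | ‖u‖ = 1 ∧ (sideCount X u x : ℝ) / (n : ℝ) = depth X x}

/-- `H_{x,y}`: the open hemisphere of unit directions `u` with `⟪u, x⟫ < ⟪u, y⟫`. -/
def HSet {d : ℕ} (x y : E d) : Set (E d) :=
  {u | ‖u‖ = 1 ∧ ⟪u, x⟫ < ⟪u, y⟫}

/-- `B_z`. -/
def BSet {d n : ℕ} (X : Fin n → E d) (z : E d) : Set (E d) :=
  {x | x ∈ MSet X ∧ USet X x ∩ HSet x z = ∅}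

/-- `B̃_z = B_z \ {z}`. -/
def BTilde {d n : ℕ} (X : Fin n → E d) (z : E d) : Set (E d) :=
  BSet X z \ {z}

/-- `v` is a unit vector normal to an affine hyperplane spanned by `d` of the sample points. -/
def normalToSampleHyperplane {d n : ℕ} (X : Fin n → E d) (v : E d) : Prop :=
  ‖v‖ = 1 ∧ ∃ (s : Finset (Fin n)) (c : ℝ), s.card = d ∧
    (affineSpan ℝ (X '' (s : Set (Fin n))) : Set (E d)) = {x : E d | ⟪v, x⟫ = c}

/-- Condition (2.1) on a unit direction `u`. -/
def cond21 {d n : ℕ} (X : Fin n → E d) (u : E d) : Prop :=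
  ∀ v : E d, normalToSampleHyperplane X v → ⟪u, v⟫ ≠ 0

/-- `A` represents the columns of a `d × (d-1)` matrix which together with the unit
vector `u` form an orthonormal basis of `ℝ^d`. -/
def IsAu {d : ℕ} (u : E d) (A : Fin (d - 1) → E d) : Prop :=
  ‖u‖ = 1 ∧ Orthonormal ℝ A ∧ ∀ j, ⟪A j, u⟫ = 0

/-- The `A_u`-projection `A_u^T x ∈ ℝ^{d-1}` of a point `x ∈ ℝ^d`. -/
def proj {d : ℕ} (A : Fin (d - 1) → E d) (x : E d) : E (d - 1) :=
  (WithLp.equiv 2 (Fin (d - 1) → ℝ)).symm (fun j => ⟪A j, x⟫)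

/-- The embedding `A_u x = ∑ j x_j A_j ∈ ℝ^d` of a point `x ∈ ℝ^{d-1}`. -/
def embed {d : ℕ} (A : Fin (d - 1) → E d) (x : E (d - 1)) : E d :=
  ∑ j, x j • A j

/-- `λ₀ = inf_{u ∈ S^{d-1}} λ*(X_u^n)`, the infimum over all directions of the maximum
Tukey depth of the projected sample. -/
def lambda0 {d n : ℕ} (X : Fin n → E d) : ℝ :=
  sInf {r : ℝ | ∃ (u : E d) (A : Fin (d - 1) → E d),
    IsAu u A ∧ r = maxDepth (fun i => proj A (X i))}

/-- The average (barycenter) of a set `K ⊆ ℝ^d`, taken with respect to the Hausdorff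
measure of dimension equal to the affine dimension of `K`. -/
def setAverage {d : ℕ} (K : Set (E d)) : E d :=
  (μH[(Module.finrank ℝ (affineSpan ℝ K).direction : ℝ)] K).toReal⁻¹ •
    ∫ x in K, x ∂(μH[(Module.finrank ℝ (affineSpan ℝ K).direction : ℝ)])

/-- Tukey's halfspace median: the average of all deepest points. -/
def TukeyMedian {d n : ℕ} (X : Fin n → E d) : E d :=
  setAverage (MSet X)

/-- `m` contaminating points suffice to break down the Tukey median at `X`. -/
def breaksDown {d n : ℕ} (X : Fin n → E d) (m : ℕ) : Prop :=
  ∀ C : ℝ, ∃ Y : Fin m → E d, C < ‖TukeyMedian (Fin.append X Y) - TukeyMedian X‖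

/-- The finite sample (additional) breakdown point of the Tukey median at `X`. -/
def FSBP {d n : ℕ} (X : Fin n → E d) : ℝ :=
  sInf {r : ℝ | ∃ m : ℕ, 1 ≤ m ∧ breaksDown X m ∧ r = (m : ℝ) / ((n : ℝ) + (m : ℝ))}

/-!
Depth takes finitely many values, so every point has an optimal direction, and an optimal direction
`u` of a deepest point stays optimal at every deepest point lying further back along `u`. This makes
`x ∈ B_z` a transitive relation. If `z₁ ∈ B_z` and `z ∈ B_{z₁}`, then `z - z₁` is orthogonal to
every optimal direction of `z₁`. But when `z₁` is interior to `M(X)`, no sample point lies on the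
boundary of an optimal halfspace at `z₁`, as moving back into `M(X)` would lose that point and lower
the depth. Hence the optimal directions of `z₁` form an open subset of the sphere, and an open set
of directions is not orthogonal to a nonzero vector.
-/

section

open Filter Topology

theorem eventually_le_iff_of_continuousAt {α β : Type*} [TopologicalSpace α] [TopologicalSpace β]
    [LinearOrder β] [OrderClosedTopology β] {f g : α → β} {a : α} (hf : ContinuousAt f a)
    (hg : ContinuousAt g a) (hne : f a ≠ g a) : ∀ᶠ x in 𝓝 a, (f x ≤ g x ↔ f a ≤ g a) := by
  rcases hne.lt_or_gt with hlt | hgt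
  · filter_upwards [hf.eventually_lt hg hlt] with x hx
    exact iff_of_true hx.le hlt.le
  · filter_upwards [hg.eventually_lt hf hgt] with x hx
    exact iff_of_false hx.not_ge hgt.not_ge

theorem eq_zero_of_eventually_inner_eq_zero {V : Type*} [NormedAddCommGroup V]
    [InnerProductSpace ℝ V] {u w : V} (h : ∀ᶠ v in 𝓝 u, ⟪v, w⟫ = 0) : w = 0 := by
  have horth : ((ℝ ∙ w)ᗮ : Set V) ∈ 𝓝 u := by
    filter_upwards [h] with v hv
    exact Submodule.mem_orthogonal_singleton_iff_inner_left.2 hv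
  have htop : (ℝ ∙ w)ᗮ = ⊤ :=
    Submodule.eq_top_of_nonempty_interior' _ ⟨u, mem_interior_iff_mem_nhds.2 horth⟩
  exact inner_self_eq_zero.1
    (Submodule.mem_orthogonal_singleton_iff_inner_left.1 (htop ▸ Submodule.mem_top))

variable {d n : ℕ} {X : Fin n → E d} {u x y z : E d}

theorem sideCount_le (X : Fin n → E d) (u x : E d) : sideCount X u x ≤ n := by
  simpa only [sideCount, Nat.card_fin] using Set.ncard_le_card {i : Fin n | ⟪u, X i⟫ ≤ ⟪u, x⟫}

theorem sideCount_mono (h : ⟪u, x⟫ ≤ ⟪u, y⟫) : sideCount X u x ≤ sideCount X u y :=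
  Set.ncard_le_ncard fun _ hi => le_trans hi h

theorem sideCount_lt_sideCount {i : Fin n} (hx : ⟪u, x⟫ < ⟪u, X i⟫) (hy : ⟪u, X i⟫ ≤ ⟪u, y⟫) :
    sideCount X u x < sideCount X u y :=
  Set.ncard_lt_ncard
    ⟨fun _ hj => le_trans hj (hx.le.trans hy), fun hsub => hx.not_ge (hsub hy)⟩

theorem sideCount_smul {c : ℝ} (hc : 0 < c) : sideCount X (c • u) x = sideCount X u x := by
  simp only [sideCount, real_inner_smul_left, mul_le_mul_iff_right₀ hc]

theorem eventually_sideCount_eq (h : ∀ i, ⟪u, X i⟫ ≠ ⟪u, z⟫) :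
    ∀ᶠ v in 𝓝 u, sideCount X v z = sideCount X u z := by
  have hside : ∀ᶠ v in 𝓝 u, ∀ i, (⟪v, X i⟫ ≤ ⟪v, z⟫ ↔ ⟪u, X i⟫ ≤ ⟪u, z⟫) :=
    eventually_all.2 fun i =>
      eventually_le_iff_of_continuousAt (by fun_prop) (by fun_prop) (h i)
  filter_upwards [hside] with v hv
  simp only [sideCount, hv]

theorem depth_le_sideCount_div (hu : ‖u‖ = 1) : depth X x ≤ sideCount X u x / n := by
  refine csInf_le ⟨0, ?_⟩ ⟨u, hu, rfl⟩
  rintro r ⟨v, -, rfl⟩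
  positivity

theorem USet_nonempty [Nontrivial (E d)] (X : Fin n → E d) (x : E d) : (USet X x).Nonempty := by
  obtain ⟨u, hu⟩ := exists_norm_eq (E d) zero_le_one
  have hfin : {r : ℝ | ∃ v : E d, ‖v‖ = 1 ∧ r = sideCount X v x / n}.Finite := by
    refine ((Set.finite_Iic n).image fun k : ℕ => (k : ℝ) / n).subset ?_
    rintro r ⟨v, -, rfl⟩
    exact ⟨_, sideCount_le X v x, rfl⟩
  have hne : {r : ℝ | ∃ v : E d, ‖v‖ = 1 ∧ r = sideCount X v x / n}.Nonempty := ⟨_, u, hu, rfl⟩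
  obtain ⟨v, hv, hdepth⟩ := hne.csInf_mem hfin
  exact ⟨v, hv, hdepth.symm⟩

theorem mem_USet_of_inner_le (hx : x ∈ MSet X) (hy : y ∈ MSet X) (hu : u ∈ USet X x)
    (h : ⟪u, y⟫ ≤ ⟪u, x⟫) : u ∈ USet X y := by
  refine ⟨hu.1, le_antisymm ?_ (depth_le_sideCount_div hu.1)⟩
  calc (sideCount X u y : ℝ) / n ≤ sideCount X u x / n := by gcongr; exact sideCount_mono h
    _ = depth X x := hu.2
    _ = depth X y := hx.trans hy.symm

theorem inner_ne_of_mem_interior_MSet (hz : z ∈ interior (MSet X)) (hu : u ∈ USet X z)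
    (i : Fin n) : ⟪u, X i⟫ ≠ ⟪u, z⟫ := by
  intro hi
  have hzM : z ∈ MSet X := interior_subset hz
  have hback : Tendsto (fun t : ℝ => z - t • u) (𝓝[>] 0) (𝓝 z) :=
    ((by fun_prop : Continuous fun t : ℝ => z - t • u).tendsto' 0 z (by simp)).mono_left
      nhdsWithin_le_nhds
  obtain ⟨t, hyM, ht : 0 < t⟩ :=
    ((hback.eventually (mem_interior_iff_mem_nhds.1 hz)).and self_mem_nhdsWithin).exists
  have hlt : ⟪u, z - t • u⟫ < ⟪u, z⟫ := by
    rw [inner_sub_right, inner_smul_right, inner_self_eq_one_of_norm_eq_one hu.1]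
    linarith
  have hcount : sideCount X u (z - t • u) < sideCount X u z :=
    sideCount_lt_sideCount (hlt.trans_eq hi.symm) hi.le
  have hn : (0 : ℝ) < n := by exact_mod_cast i.pos
  have hratio : (sideCount X u (z - t • u) : ℝ) / n < sideCount X u z / n := by gcongr
  have huy : u ∈ USet X (z - t • u) := mem_USet_of_inner_le hzM hyM hu hlt.le
  exact hratio.ne (huy.2.trans ((hyM.trans hzM.symm).trans hu.2.symm))

theorem eventually_normalize_mem_USet (hz : z ∈ interior (MSet X)) (hu : u ∈ USet X z) :
    ∀ᶠ v in 𝓝 u, ‖v‖⁻¹ • v ∈ USet X z := by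
  have hu0 : u ≠ 0 := ne_zero_of_norm_ne_zero (by simp [hu.1])
  filter_upwards [eventually_sideCount_eq (inner_ne_of_mem_interior_MSet hz hu),
    eventually_ne_nhds hu0] with v hcount hv
  refine ⟨norm_smul_inv_norm hv, ?_⟩
  rw [sideCount_smul (inv_pos.2 (norm_pos_iff.2 hv)), hcount, hu.2]

theorem exists_mem_USet_inner_ne_zero {w : E d} (hz : z ∈ interior (MSet X)) (hw : w ≠ 0) :
    ∃ u ∈ USet X z, ⟪u, w⟫ ≠ 0 := by
  by_contra! horth
  have : Nontrivial (E d) := nontrivial_of_ne w 0 hw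
  obtain ⟨u, hu⟩ := USet_nonempty X z
  refine hw (eq_zero_of_eventually_inner_eq_zero (u := u) ?_)
  filter_upwards [eventually_normalize_mem_USet hz hu] with v hv
  have hscaled : ‖v‖⁻¹ * ⟪v, w⟫ = 0 := by rw [← real_inner_smul_left, horth _ hv]
  rcases mul_eq_zero.1 hscaled with hnorm | hinner
  · rw [norm_eq_zero.1 (inv_eq_zero.1 hnorm), inner_zero_left]
  · exact hinner

theorem mem_BSet_iff : x ∈ BSet X z ↔ x ∈ MSet X ∧ ∀ u ∈ USet X x, ⟪u, z⟫ ≤ ⟪u, x⟫ := by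
  refine and_congr_right fun _ => ?_
  rw [Set.eq_empty_iff_forall_notMem]
  exact forall_congr' fun u =>
    ⟨fun h hu => not_lt.1 fun hlt => h ⟨hu, hu.1, hlt⟩, fun h hu => (h hu.1).not_gt hu.2.2⟩

theorem mem_USet_of_mem_BSet (hxy : x ∈ BSet X y) (hy : y ∈ MSet X) (hu : u ∈ USet X x) :
    u ∈ USet X y :=
  mem_USet_of_inner_le hxy.1 hy hu ((mem_BSet_iff.1 hxy).2 u hu)

theorem BSet_subset_BSet (hyz : y ∈ BSet X z) : BSet X y ⊆ BSet X z := by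
  intro x hxy
  refine mem_BSet_iff.2 ⟨hxy.1, fun u hu => ?_⟩
  calc ⟪u, z⟫ ≤ ⟪u, y⟫ := (mem_BSet_iff.1 hyz).2 u (mem_USet_of_mem_BSet hxy hyz.1 hu)
    _ ≤ ⟪u, x⟫ := (mem_BSet_iff.1 hxy).2 u hu

theorem inner_eq_of_mem_BSet_of_mem_BSet (hxy : x ∈ BSet X y) (hyx : y ∈ BSet X x)
    (hu : u ∈ USet X x) : ⟪u, x⟫ = ⟪u, y⟫ :=
  le_antisymm ((mem_BSet_iff.1 hyx).2 u (mem_USet_of_mem_BSet hxy hyx.1 hu))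
    ((mem_BSet_iff.1 hxy).2 u hu)

theorem notMem_BSet_of_mem_BTilde {z₁ : E d} (hz₁ : z₁ ∈ interior (MSet X))
    (hz : z ∈ BTilde X z₁) : z₁ ∉ BSet X z := by
  intro hmem
  obtain ⟨u, hu, hne⟩ := exists_mem_USet_inner_ne_zero hz₁ (sub_ne_zero.2 hz.2)
  refine hne ?_
  rw [inner_sub_right, inner_eq_of_mem_BSet_of_mem_BSet hmem hz.1 hu, sub_self]

theorem lemma2_o3_general (X : Fin n → E d) (z₁ : E d) (hz₁ : z₁ ∈ interior (MSet X)) :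
    ∀ z ∈ BTilde X z₁, BSet X z ⊆ BSet X z₁ ∧ z₁ ∉ BSet X z ∧ BSet X z ⊆ BTilde X z₁ := by
  intro z hz
  have hsub : BSet X z ⊆ BSet X z₁ := BSet_subset_BSet hz.1
  have hnot : z₁ ∉ BSet X z := notMem_BSet_of_mem_BTilde hz₁ hz
  exact ⟨hsub, hnot, Set.subset_sdiff_singleton hsub hnot⟩

end

/-- **Lemma 2, o3.** For every `z ∈ B̃_{z₁}` one has `B_z ⊆ B_{z₁}` and
`z₁ ∉ B_z`; that is, `B_z ⊆ B̃_{z₁}`. -/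
theorem lemma2_o3 {d n : ℕ} (hd : 2 ≤ d) (X : Fin n → E d)
    (hX : inGeneralPosition X) (hdim : affineSpan ℝ (MSet X) = ⊤)
    (z₁ : E d) (hz₁ : z₁ ∈ interior (MSet X)) (hB : (BTilde X z₁).Nonempty) :
    ∀ z ∈ BTilde X z₁, BSet X z ⊆ BSet X z₁ ∧ z₁ ∉ BSet X z ∧ BSet X z ⊆ BTilde X z₁ :=
  lemma2_o3_general X z₁ hz₁
end
end

section
/- (Theorem 1) Suppose X^n ⊂ ℝ^d (d ≥ 2) is in general position. Then the finite sample additional breakdown point of Tukey's halfspace median T* is ε(T*, X^n) = λ_0 / (1 + λ_0), where λ_0 = inf over u ∈ S^{d−1} of λ*(X_u^n) is the infimum over all directions of the maximum Tukey depth of the projected sample X_u^n ⊂ ℝ^{d−1}. -/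
open scoped RealInnerProductSpace
open MeasureTheory

noncomputable section

/-!
Write `k = n λ₀`, the least depth count of a deepest point among the projections of the sample `X`
along lines. By Hahn–Banach, the points of depth at least `h` are the intersection of the hulls of
the subsamples missing fewer than `h` points. By Helly and separation, if there are none, then `1`
is a sum of `d + 1` affine functionals, each positive at fewer than `h` points: a thin cover.

*`k` points suffice.* Put them all at `r • u`, where `u` attains the minimum. A thin cover of the
projection, pulled back and tilted so as to vanish at `r • u`, shows that no point has depth more
than `k`, so that `r • u` is a deepest point. The deepest region shrunk by half towards `r • u`
carries a fixed fraction of its measure, so the barycenter escapes with `r`.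

*Fewer do not.* A deepest point of depth at least `k` lies in the ball containing `X`. Otherwise
there is a thin cover `f` of `X` with bound `k`, and by the deep projections any `d` of the
corresponding halfspaces `f j ≤ 0` meet. If the deepest point is far away, some nonnegative
combination of few of the `f j` separates it from `X` at a controlled rate. In a combination that
cannot be made sparser, Hoffman's bound yields nearby functionals with zero sum and no other linear
relation, and in general position a dimension count shows that these `f j` are together at most one
positive sample point short of the bound `k - 1`. That leaves too few contaminating points on their
positive sides to give the far point its depth.
-/

open scoped Finset

section AffineFunctional

/-- A real-valued continuous affine function; its sign sets `{f ≤ 0}` are the closed halfspaces,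
the empty set and the whole space. -/
abbrev AffineFunctional (V : Type*) [NormedAddCommGroup V] [NormedSpace ℝ V] : Type _ :=
  V →ᴬ[ℝ] ℝ

variable {V J : Type*} [NormedAddCommGroup V] [NormedSpace ℝ V]

namespace AffineFunctional

/-- Evaluation of affine functionals at a point, as a linear map. -/
def eval (y : V) : AffineFunctional V →ₗ[ℝ] ℝ where
  toFun f := f y
  map_add' _ _ := rfl
  map_smul' _ _ := rfl

@[simp]
theorem sum_apply (s : Finset J) (f : J → AffineFunctional V) (y : V) :
    (∑ j ∈ s, f j) y = ∑ j ∈ s, f j y :=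
  map_sum (eval y) f s

theorem contLinear_sub (f : AffineFunctional V) (x y : V) : f.contLinear (x - y) = f x - f y :=
  f.contLinear_map_vsub x y

theorem apply_eq (f : AffineFunctional V) (x : V) : f x = f.contLinear x + f 0 := by
  have h := f.contLinear_sub x 0
  rw [sub_zero] at h
  linarith

theorem sum_contLinear_eq_zero [Fintype J] {f : J → AffineFunctional V} {c : ℝ}
    (hf : ∀ y, ∑ j, f j y = c) (v : V) : ∑ j, (f j).contLinear v = 0 := by
  rw [← sub_zero v]
  simp only [contLinear_sub, Finset.sum_sub_distrib, hf, sub_self]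

theorem convex_le (f : AffineFunctional V) (c : ℝ) : Convex ℝ {y | f y ≤ c} :=
  (convex_Iic c).affine_preimage f.toAffineMap

theorem convex_eq (f : AffineFunctional V) (c : ℝ) : Convex ℝ {y | f y = c} :=
  (convex_singleton c).affine_preimage f.toAffineMap

instance [FiniteDimensional ℝ V] : FiniteDimensional ℝ (AffineFunctional V) :=
  (ContinuousAffineMap.decompLinearEquiv ℝ ℝ V ℝ).symm.finiteDimensional

theorem finrank_eq [FiniteDimensional ℝ V] :
    Module.finrank ℝ (AffineFunctional V) = Module.finrank ℝ V + 1 := by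
  rw [(ContinuousAffineMap.decompLinearEquiv ℝ ℝ V ℝ).finrank_eq, Module.finrank_prod,
    Module.finrank_self, add_comm,
    ← (LinearMap.toContinuousLinearMap : (V →ₗ[ℝ] ℝ) ≃ₗ[ℝ] StrongDual ℝ V).finrank_eq]
  exact congrArg (· + 1) Subspace.dual_finrank_eq

end AffineFunctional

theorem exists_strongDual_neg_of_iInter_eq_empty [Fintype J] {C : J → Set V}
    (hC : ∀ j, IsCompact (C j)) (hC' : ∀ j, Convex ℝ (C j)) (hempty : ⋂ j, C j = ∅) :
    ∃ l : J → StrongDual ℝ V, (∀ v, ∑ j, l j v = 0) ∧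
      ∀ c : J → V, (∀ j, c j ∈ C j) → ∑ j, l j (c j) < 0 := by
  classical
  have : Nonempty J := by
    by_contra hJ
    rw [not_nonempty_iff] at hJ
    simp [Set.iInter_of_empty] at hempty
  let diag : V →ₗ[ℝ] (J → V) := LinearMap.pi fun _ => LinearMap.id
  have hclosed : IsClosed (LinearMap.range diag : Set (J → V)) := by
    rw [LinearMap.coe_range]
    exact Function.LeftInverse.isClosed_range (f := fun c => c (Classical.arbitrary J))
      (fun _ => rfl) (continuous_apply _) (continuous_pi fun _ => continuous_id)
  have hdisj : Disjoint (Set.univ.pi C) (LinearMap.range diag : Set (J → V)) := by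
    rw [Set.disjoint_left]
    rintro _ hc ⟨w, rfl⟩
    exact hempty.subset (Set.mem_iInter.2 fun j => hc j trivial)
  obtain ⟨F, a, b, hFC, hab, hFdiag⟩ := geometric_hahn_banach_compact_closed
    (convex_pi fun j _ => hC' j) (isCompact_univ_pi hC) (LinearMap.range diag).convex hclosed hdisj
  have hb : b < 0 := by simpa using hFdiag 0 (Submodule.zero_mem _)
  have hF : ∀ c : J → V, F c = ∑ j, F (Pi.single j (c j)) := fun c => by
    rw [← map_sum, Finset.univ_sum_single]
  refine ⟨fun j => F.comp (ContinuousLinearMap.single ℝ (fun _ => V) j), fun v => ?_,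
    fun c hc => ?_⟩
  · by_contra hv
    have hv' : F (diag v) ≠ 0 := by rwa [hF]
    have := hFdiag (diag ((b / F (diag v)) • v)) ⟨_, rfl⟩
    rw [map_smul, map_smul, smul_eq_mul, div_mul_cancel₀ _ hv'] at this
    exact this.false
  · exact (hF c).symm.trans_lt ((hFC c fun j _ => hc j).trans (hab.trans hb))

theorem exists_affineFunctional_nonpos_of_iInter_eq_empty [Fintype J] {C : J → Set V}
    (hne : ∀ j, (C j).Nonempty) (hC : ∀ j, IsCompact (C j)) (hC' : ∀ j, Convex ℝ (C j))
    (hempty : ⋂ j, C j = ∅) :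
    ∃ f : J → AffineFunctional V, (∀ y, ∑ j, f j y = 1) ∧ ∀ j, ∀ y ∈ C j, f j y ≤ 0 := by
  obtain ⟨l, hl, hneg⟩ := exists_strongDual_neg_of_iInter_eq_empty hC hC' hempty
  choose c hc hmax using fun j => (hC j).exists_isMaxOn (hne j) (l j).continuous.continuousOn
  set η : ℝ := -∑ j, l j (c j)
  have hη : 0 < η := neg_pos.2 (hneg c hc)
  refine ⟨fun j => η⁻¹ • ((l j).toContinuousAffineMap - ContinuousAffineMap.const ℝ V (l j (c j))),
    fun y => ?_, fun j y hy => ?_⟩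
  · simp only [ContinuousAffineMap.smul_apply, ContinuousAffineMap.sub_apply, smul_eq_mul,
      ContinuousLinearMap.coe_toContinuousAffineMap, ContinuousAffineMap.coe_const,
      Function.const_apply, ← Finset.mul_sum, Finset.sum_sub_distrib, hl, zero_sub]
    exact inv_mul_cancel₀ hη.ne'
  · exact mul_nonpos_of_nonneg_of_nonpos (inv_nonneg.2 hη.le) (sub_nonpos.2 (hmax j hy))

end AffineFunctional

section HalfspaceCount

variable {V ι : Type*} [NormedAddCommGroup V] [NormedSpace ℝ V]

/-- The convex hull of the sample points with index in `T`. -/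
def subsampleHull (X : ι → V) (T : Finset ι) : Set V :=
  convexHull ℝ (X '' T)

theorem mem_subsampleHull {X : ι → V} {T : Finset ι} {i : ι} (hi : i ∈ T) :
    X i ∈ subsampleHull X T :=
  subset_convexHull ℝ _ ⟨i, hi, rfl⟩

theorem subsampleHull_subset {X : ι → V} {T : Finset ι} {S : Set V} (hS : Convex ℝ S)
    (hT : ∀ i ∈ T, X i ∈ S) : subsampleHull X T ⊆ S :=
  convexHull_min (Set.image_subset_iff.2 hT) hS

theorem subsampleHull_mono (X : ι → V) {S T : Finset ι} (h : S ⊆ T) :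
    subsampleHull X S ⊆ subsampleHull X T :=
  convexHull_mono (Set.image_mono h)

theorem isCompact_subsampleHull (X : ι → V) (T : Finset ι) : IsCompact (subsampleHull X T) :=
  (T.finite_toSet.image X).isCompact_convexHull (𝕜 := ℝ)

theorem subsampleHull_nonempty {X : ι → V} {T : Finset ι} (hT : T.Nonempty) :
    (subsampleHull X T).Nonempty :=
  let ⟨i, hi⟩ := hT
  ⟨X i, mem_subsampleHull hi⟩

variable [Fintype ι]

/-- The number of sample points in the closed halfspace `{z | l x ≤ l z}`. The functional `l` need
not be normalised; the degenerate choice `l = 0` counts the whole sample. -/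
def halfspaceCount (X : ι → V) (l : StrongDual ℝ V) (x : V) : ℕ :=
  #{i | l x ≤ l (X i)}

/-- The points of depth at least `k`: every closed halfspace containing such a point contains at
least `k` sample points. -/
def deepRegion (X : ι → V) (k : ℕ) : Set V :=
  {x | ∀ l, k ≤ halfspaceCount X l x}

theorem deepRegion_eq_iInter_subsampleHull [DecidableEq ι] (X : ι → V) (k : ℕ) :
    deepRegion X k = ⋂ T ∈ ({T | #Tᶜ < k} : Finset (Finset ι)), subsampleHull X T := by
  ext x
  simp only [deepRegion, Set.mem_ofPred_eq, Set.mem_iInter₂, Finset.mem_filter, Finset.mem_univ,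
    true_and]
  refine ⟨fun hx T hT => ?_, fun hx l => ?_⟩
  · by_contra hxT
    obtain ⟨l, a, hla, hax⟩ := geometric_hahn_banach_closed_point (convex_convexHull ℝ _)
      (isCompact_subsampleHull X T).isClosed hxT
    refine ((hx l).trans (Finset.card_le_card fun i hi => ?_)).not_gt hT
    refine Finset.mem_compl.2 fun hiT => (hla _ (mem_subsampleHull hiT)).not_ge ?_
    exact hax.le.trans (Finset.mem_filter.1 hi).2
  · by_contra! hl
    let T : Finset ι := {i | l (X i) < l x}
    have hT : #Tᶜ < k := by
      have : Tᶜ = ({i | l x ≤ l (X i)} : Finset ι) := by ext; simp [T]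
      rwa [this]
    have hsub : subsampleHull X T ⊆ {y | l y < l x} :=
      subsampleHull_subset (convex_halfSpace_lt l.isLinear _) fun i hi => (Finset.mem_filter.1 hi).2
    exact lt_irrefl (l x) (hsub (hx T hT))

theorem convex_deepRegion (X : ι → V) (k : ℕ) : Convex ℝ (deepRegion X k) := by
  classical
  rw [deepRegion_eq_iInter_subsampleHull]
  exact convex_iInter₂ fun _ _ => convex_convexHull ℝ _

theorem isCompact_deepRegion (X : ι → V) {k : ℕ} (hk : 1 ≤ k) : IsCompact (deepRegion X k) := by
  classical
  rw [deepRegion_eq_iInter_subsampleHull]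
  have hclosed : IsClosed (⋂ T ∈ ({T | #Tᶜ < k} : Finset (Finset ι)), subsampleHull X T) :=
    isClosed_biInter fun T _ => (isCompact_subsampleHull X T).isClosed
  refine (isCompact_subsampleHull X Finset.univ).of_isClosed_subset hclosed ?_
  exact Set.biInter_subset_of_mem (by simpa using Nat.lt_of_succ_le hk)

/-- An affine partition of unity each of whose members is positive at fewer than `k` sample
points: a certificate that `deepRegion X k` is empty. -/
structure IsThinCover {J : Type*} [Fintype J] (X : ι → V) (k : ℕ) (f : J → AffineFunctional V) :
    Prop where
  sum_eq_one : ∀ y, ∑ j, f j y = 1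
  card_pos_lt : ∀ j, #{i | 0 < f j (X i)} < k

variable [FiniteDimensional ℝ V]

theorem exists_iInter_subsampleHull_eq_empty [DecidableEq ι] {X : ι → V} {k : ℕ}
    (hX : deepRegion X k = ∅) :
    ∃ T : Fin (Module.finrank ℝ V + 1) → Finset ι, (∀ j, #(T j)ᶜ < k) ∧
      ⋂ j, subsampleHull X (T j) = ∅ := by
  let thin : Finset (Finset ι) := {T | #Tᶜ < k}
  obtain ⟨I, hI, hIcard, hIempty⟩ : ∃ I ⊆ thin, #I ≤ Module.finrank ℝ V + 1 ∧
      ¬ (⋂ T ∈ I, subsampleHull X T).Nonempty := by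
    by_contra! hcon
    have := Convex.helly_theorem' (𝕜 := ℝ) (F := subsampleHull X) (s := thin)
      (fun T _ => convex_convexHull ℝ _) hcon
    rw [← deepRegion_eq_iInter_subsampleHull, hX] at this
    exact Set.not_nonempty_empty this
  have hIne : Nonempty I := by
    refine (Finset.nonempty_iff_ne_empty.2 fun h => hIempty ?_).to_subtype
    simp [h]
  obtain ⟨e⟩ : Nonempty (I ↪ Fin (Module.finrank ℝ V + 1)) := by
    rw [Function.Embedding.nonempty_iff_card_le]
    simpa using hIcard
  let T := Function.invFun e
  have hT : Function.Surjective T := Function.invFun_surjective e.injective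
  refine ⟨fun j => T j, fun j => (Finset.mem_filter.1 (hI (T j).2)).2, ?_⟩
  refine Set.eq_empty_of_forall_notMem fun y hy => hIempty ⟨y, Set.mem_iInter₂.2 fun S hS => ?_⟩
  obtain ⟨j, hj⟩ := hT ⟨S, hS⟩
  have hyj : y ∈ subsampleHull X (T j) := Set.mem_iInter.1 hy j
  rwa [hj] at hyj

theorem exists_isThinCover {X : ι → V} {k : ℕ} (hX : deepRegion X k = ∅) :
    ∃ f : Fin (Module.finrank ℝ V + 1) → AffineFunctional V, IsThinCover X k f := by
  classical
  rcases lt_or_ge (Fintype.card ι) k with hcard | hcard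
  · refine ⟨fun _ => ContinuousAffineMap.const ℝ V (Module.finrank ℝ V + 1 : ℝ)⁻¹, fun y => ?_,
      fun j => (Finset.card_le_univ _).trans_lt hcard⟩
    simpa using mul_inv_cancel₀ (Nat.cast_add_one_ne_zero (R := ℝ) (Module.finrank ℝ V))
  obtain ⟨T, hT, hempty⟩ := exists_iInter_subsampleHull_eq_empty hX
  have hne : ∀ j, (T j).Nonempty := fun j => by
    rw [← Finset.card_pos]
    have := hT j
    rw [Finset.card_compl] at this
    omega
  obtain ⟨f, hsum, hf⟩ := exists_affineFunctional_nonpos_of_iInter_eq_empty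
    (fun j => subsampleHull_nonempty (hne j)) (fun j => isCompact_subsampleHull X (T j))
    (fun j => convex_convexHull ℝ _) hempty
  refine ⟨f, hsum, fun j => (Finset.card_le_card fun i hi => ?_).trans_lt (hT j)⟩
  simp only [Finset.mem_filter, Finset.mem_univ, true_and] at hi
  exact Finset.mem_compl.2 fun hij => (hf j _ (mem_subsampleHull hij)).not_gt hi

end HalfspaceCount

section DeepProjections

variable {V ι J : Type*} [NormedAddCommGroup V] [NormedSpace ℝ V] [Fintype ι] [Fintype J]

/-- Every projection of the sample along a line has a point of depth at least `k`. The functionals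
on the quotient by `ℝ ∙ u` are those vanishing at `u`, and `z` is any lift of the deep point. -/
def HasDeepProjections (X : ι → V) (k : ℕ) : Prop :=
  ∀ u : V, u ≠ 0 → ∃ z, ∀ l : StrongDual ℝ V, l u = 0 → k ≤ halfspaceCount X l z

variable {X : ι → V} {k : ℕ}

theorem HasDeepProjections.le_card [Nontrivial V] (hX : HasDeepProjections X k) :
    k ≤ Fintype.card ι := by
  obtain ⟨u, hu⟩ := exists_ne (0 : V)
  obtain ⟨z, hz⟩ := hX u hu
  exact (hz 0 rfl).trans (Finset.card_le_univ _)

theorem HasDeepProjections.exists_le_card_pos (hX : HasDeepProjections X k)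
    {f : J → AffineFunctional V} (hsum : ∀ y, ∑ j, f j y = 1) {u : V} (hu : u ≠ 0)
    (hfu : ∀ j, (f j).contLinear u = 0) : ∃ j, k ≤ #{i | 0 < f j (X i)} := by
  obtain ⟨z, hz⟩ := hX u hu
  obtain ⟨j, -, hj⟩ : ∃ j ∈ Finset.univ, 0 < f j z :=
    Finset.exists_lt_of_sum_lt (by simp [hsum])
  refine ⟨j, (hz _ (hfu j)).trans (Finset.card_le_card fun i hi => ?_)⟩
  simp only [Finset.mem_filter, Finset.mem_univ, true_and] at hi ⊢
  rw [(f j).apply_eq] at hj ⊢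
  linarith

theorem exists_ne_zero_forall_apply_eq_zero [FiniteDimensional ℝ V] [Nontrivial V]
    (hJ : Fintype.card J ≤ Module.finrank ℝ V) {l : J → StrongDual ℝ V}
    (hl : ∀ v, ∑ j, l j v = 0) : ∃ u, u ≠ 0 ∧ ∀ j, l j u = 0 := by
  classical
  rcases isEmpty_or_nonempty J with hJ' | ⟨⟨j₀⟩⟩
  · exact (exists_ne (0 : V)).imp fun u hu => ⟨hu, isEmptyElim⟩
  let Φ : V →ₗ[ℝ] ({j // j ≠ j₀} → ℝ) := LinearMap.pi fun j => (l j).toLinearMap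
  have hΦ : LinearMap.ker Φ ≠ ⊥ := LinearMap.ker_ne_bot_of_finrank_lt <| by
    have : 0 < Fintype.card J := Fintype.card_pos_iff.2 ⟨j₀⟩
    rw [Module.finrank_fintype_fun_eq_card, Fintype.card_subtype_compl, Fintype.card_subtype_eq]
    omega
  obtain ⟨u, hu, hu0⟩ := Submodule.exists_mem_ne_zero_of_ne_bot hΦ
  have hne : ∀ j, j ≠ j₀ → l j u = 0 := fun j hj => congrFun (LinearMap.mem_ker.1 hu) ⟨j, hj⟩
  refine ⟨u, hu0, fun j => ?_⟩
  rcases eq_or_ne j j₀ with rfl | hj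
  · rw [← Fintype.sum_eq_single (f := fun j => l j u) _ hne, hl]
  · exact hne j hj

theorem HasDeepProjections.iInter_subsampleHull_nonempty [DecidableEq ι] [FiniteDimensional ℝ V]
    [Nontrivial V] (hX : HasDeepProjections X k) (hJ : Fintype.card J ≤ Module.finrank ℝ V)
    {T : J → Finset ι} (hT : ∀ j, #(T j)ᶜ < k) : (⋂ j, subsampleHull X (T j)).Nonempty := by
  by_contra hempty
  rw [Set.not_nonempty_iff_eq_empty] at hempty
  have hne : ∀ j, (T j).Nonempty := fun j => by
    rw [← Finset.card_pos]
    have := (hT j).trans_le hX.le_card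
    rw [Finset.card_compl] at this
    omega
  obtain ⟨f, hsum, hf⟩ := exists_affineFunctional_nonpos_of_iInter_eq_empty
    (fun j => subsampleHull_nonempty (hne j)) (fun j => isCompact_subsampleHull X (T j))
    (fun j => convex_convexHull ℝ _) hempty
  obtain ⟨u, hu, hfu⟩ := exists_ne_zero_forall_apply_eq_zero hJ
    (AffineFunctional.sum_contLinear_eq_zero hsum)
  obtain ⟨j, hj⟩ := hX.exists_le_card_pos hsum hu hfu
  refine (hj.trans (Finset.card_le_card fun i hi => ?_)).not_gt (hT j)
  exact Finset.mem_compl.2 fun hij =>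
    (hf j _ (mem_subsampleHull hij)).not_gt (Finset.mem_filter.1 hi).2

end DeepProjections

section Hoffman

theorem exists_first_zero {I : Type*} {S : Finset I} {a b : I → ℝ} (ha : ∀ i ∈ S, a i ≤ 0)
    (hb : ∃ i ∈ S, 0 < b i) :
    ∃ t ∈ Set.Icc (0 : ℝ) 1, ∃ i ∈ S, (1 - t) * a i + t * b i = 0 ∧
      ∀ j ∈ S, (1 - t) * a j + t * b j ≤ 0 := by
  classical
  obtain ⟨i₁, hi₁, hbi₁⟩ := hb
  obtain ⟨i, hi, hmin⟩ := (S.filter (0 < b ·)).exists_min_image (fun i => a i / (a i - b i))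
    ⟨i₁, Finset.mem_filter.2 ⟨hi₁, hbi₁⟩⟩
  obtain ⟨hiS, hbi⟩ := Finset.mem_filter.1 hi
  have hden : ∀ j ∈ S, 0 < b j → a j - b j < 0 := fun j hj hbj => by linarith [ha j hj]
  set t := a i / (a i - b i)
  have ht0 : 0 ≤ t := div_nonneg_of_nonpos (ha i hiS) (hden i hiS hbi).le
  have ht1 : t ≤ 1 := (div_le_one_of_neg (hden i hiS hbi)).2 (by linarith)
  refine ⟨t, ⟨ht0, ht1⟩, i, hiS, ?_, fun j hj => ?_⟩
  · linear_combination -div_mul_cancel₀ (a i) (hden i hiS hbi).ne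
  · rcases le_or_gt (b j) 0 with hbj | hbj
    · nlinarith [ha j hj]
    · have := (le_div_iff_of_neg (hden j hj hbj)).1 (hmin j (Finset.mem_filter.2 ⟨hj, hbj⟩))
      linarith

variable {W F : Type*} [NormedAddCommGroup W] [NormedSpace ℝ W] [NormedAddCommGroup F]
  [NormedSpace ℝ F]

theorem exists_active_constraint {I : Type*} {l : I → StrongDual ℝ W} {Φ : W →ₗ[ℝ] F}
    {S : Finset I} {N : Submodule ℝ W} {h z : W} (hh : h ∈ N) (hl : ∀ i ∈ S, l i h ≤ 0)
    (hz : z ∈ N) (hΦz : Φ z = 0) (hlz : ∃ i ∈ S, 0 < l i z) :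
    ∃ i ∈ S, ∃ h' ∈ N ⊓ LinearMap.ker (l i).toLinearMap, (∀ j ∈ S, l j h' ≤ 0) ∧
      ‖Φ h'‖ ≤ ‖Φ h‖ ∧ ‖h - h'‖ ≤ ‖h - z‖ := by
  obtain ⟨t, ⟨ht0, ht1⟩, i, hi, hti, ht⟩ := exists_first_zero hl hlz
  have hl' : ∀ j, l j ((1 - t) • h + t • z) = (1 - t) * l j h + t * l j z := fun j => by
    rw [map_add, map_smul, map_smul, smul_eq_mul, smul_eq_mul]
  refine ⟨i, hi, (1 - t) • h + t • z,
    ⟨N.add_mem (N.smul_mem _ hh) (N.smul_mem _ hz), (hl' i).trans hti⟩,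
    fun j hj => (hl' j).trans_le (ht j hj), ?_, ?_⟩
  · rw [map_add, map_smul, map_smul, hΦz, smul_zero, add_zero, norm_smul, Real.norm_eq_abs,
      abs_of_nonneg (sub_nonneg.2 ht1)]
    nlinarith [norm_nonneg (Φ h)]
  · have : h - ((1 - t) • h + t • z) = t • (h - z) := by module
    rw [this, norm_smul, Real.norm_eq_abs, abs_of_nonneg ht0]
    nlinarith [norm_nonneg (h - z)]

variable [FiniteDimensional ℝ W]

theorem exists_mem_ker_norm_sub_le (Φ : W →ₗ[ℝ] F) (N : Submodule ℝ W) :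
    ∃ κ : ℝ, 0 ≤ κ ∧ ∀ h ∈ N, ∃ z ∈ N, Φ z = 0 ∧ ‖h - z‖ ≤ κ * ‖Φ h‖ := by
  let ψ := Φ.domRestrict N
  obtain ⟨s, hs⟩ := ψ.rangeRestrict.exists_rightInverse_of_surjective ψ.range_rangeRestrict
  let s' : LinearMap.range ψ →L[ℝ] N := s.toContinuousLinearMap
  refine ⟨‖s'‖, s'.opNorm_nonneg, fun h hh => ?_⟩
  let y := ψ.rangeRestrict ⟨h, hh⟩
  have hy : Φ (s y) = Φ h := congrArg Subtype.val (LinearMap.congr_fun hs y)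
  refine ⟨h - s y, N.sub_mem hh (s y).2, by rw [map_sub, hy, sub_self], ?_⟩
  rw [sub_sub_cancel]
  exact s'.le_opNorm y

/-- Hoffman's bound, relative to a subspace `N`. The induction moves `h` towards a solution of the
equations alone until a constraint becomes active, and then makes that constraint an equation. -/
theorem exists_hoffman_bound_of_submodule {I : Type*} (l : I → StrongDual ℝ W) (Φ : W →ₗ[ℝ] F)
    (S : Finset I) (N : Submodule ℝ W) :
    ∃ κ : ℝ, 0 ≤ κ ∧ ∀ h ∈ N, (∀ i ∈ S, l i h ≤ 0) →
      ∃ z ∈ N, (∀ i ∈ S, l i z ≤ 0) ∧ Φ z = 0 ∧ ‖h - z‖ ≤ κ * ‖Φ h‖ := by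
  classical
  induction S using Finset.strongInduction generalizing N with
  | H S ih =>
  choose! κ hκ0 hκ using fun i (hi : i ∈ S) =>
    ih (S.erase i) (Finset.erase_ssubset hi) (N ⊓ LinearMap.ker (l i).toLinearMap)
  obtain ⟨κ₀, hκ₀, hfree⟩ := exists_mem_ker_norm_sub_le Φ N
  have hκsum : 0 ≤ ∑ i ∈ S, κ i := Finset.sum_nonneg hκ0
  refine ⟨κ₀ + ∑ i ∈ S, κ i, by positivity, fun h hh hl => ?_⟩
  obtain ⟨z₀, hz₀N, hz₀, hhz₀⟩ := hfree h hh
  by_cases hz₀l : ∀ i ∈ S, l i z₀ ≤ 0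
  · refine ⟨z₀, hz₀N, hz₀l, hz₀, hhz₀.trans ?_⟩
    gcongr
    linarith
  push Not at hz₀l
  obtain ⟨i, hi, h', hh', hl', hΦh', hhh'⟩ := exists_active_constraint hh hl hz₀N hz₀ hz₀l
  obtain ⟨z, ⟨hzN, hzi⟩, hz, hΦz, hh'z⟩ := hκ i hi h' hh' fun j hj =>
    hl' j (Finset.mem_of_mem_erase hj)
  refine ⟨z, hzN, fun j hj => ?_, hΦz, ?_⟩
  · rcases eq_or_ne j i with rfl | hji
    · exact le_of_eq hzi
    · exact hz j (Finset.mem_erase.2 ⟨hji, hj⟩)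
  calc ‖h - z‖ ≤ ‖h - h'‖ + ‖h' - z‖ := norm_sub_le_norm_sub_add_norm_sub h h' z
    _ ≤ κ₀ * ‖Φ h‖ + κ i * ‖Φ h‖ :=
      add_le_add (hhh'.trans hhz₀) (hh'z.trans (by gcongr; exact hκ0 i hi))
    _ ≤ (κ₀ + ∑ i ∈ S, κ i) * ‖Φ h‖ := by
      rw [add_mul]
      gcongr
      exact Finset.single_le_sum hκ0 hi

theorem exists_hoffman_bound {I : Type*} [Finite I] (l : I → StrongDual ℝ W) (Φ : W →ₗ[ℝ] F) :
    ∃ κ : ℝ, ∀ h, (∀ i, l i h ≤ 0) →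
      ∃ z, (∀ i, l i z ≤ 0) ∧ Φ z = 0 ∧ ‖h - z‖ ≤ κ * ‖Φ h‖ := by
  have := Fintype.ofFinite I
  obtain ⟨κ, -, hκ⟩ := exists_hoffman_bound_of_submodule l Φ Finset.univ ⊤
  exact ⟨κ, by simpa using hκ⟩

variable {V ι J : Type*} [NormedAddCommGroup V] [NormedSpace ℝ V]

/-- Hoffman's bound with constant `κ` for the linear system in families of affine functionals whose
inequalities are `z j ≤ 0` at the sample points in `T j` and whose equation is `∑ j, z j = 0`. -/
def IsHoffmanConstant [Fintype J] (X : ι → V) (T : J → Finset ι) (κ : ℝ) : Prop :=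
  ∀ h : J → AffineFunctional V, (∀ j, ∀ i ∈ T j, h j (X i) ≤ 0) →
    ∃ z : J → AffineFunctional V, (∀ j, ∀ i ∈ T j, z j (X i) ≤ 0) ∧ ∑ j, z j = 0 ∧
      ∀ j, ‖h j - z j‖ ≤ κ * ‖∑ j, h j‖

theorem IsHoffmanConstant.mono [Fintype J] {X : ι → V} {T : J → Finset ι} {κ κ' : ℝ}
    (h : IsHoffmanConstant X T κ) (hκ : κ ≤ κ') : IsHoffmanConstant X T κ' := fun g hg => by
  obtain ⟨z, hz, hsum, hgz⟩ := h g hg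
  exact ⟨z, hz, hsum, fun j => (hgz j).trans (by gcongr)⟩

variable [FiniteDimensional ℝ V]

theorem exists_isHoffmanConstant [Fintype J] (X : ι → V) (T : J → Finset ι) :
    ∃ κ, IsHoffmanConstant X T κ := by
  let l : (Σ j, T j) → StrongDual ℝ (J → AffineFunctional V) := fun p =>
    LinearMap.toContinuousLinearMap (AffineFunctional.eval (X p.2) ∘ₗ LinearMap.proj p.1)
  let Φ : (J → AffineFunctional V) →ₗ[ℝ] AffineFunctional V := ∑ j, LinearMap.proj j
  have hΦ : ∀ h, Φ h = ∑ j, h j := fun h => by simp [Φ]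
  obtain ⟨κ, H⟩ := exists_hoffman_bound l Φ
  refine ⟨κ, fun h hh => ?_⟩
  obtain ⟨z, hz, hΦz, hhz⟩ := H h fun p => hh p.1 p.2 p.2.2
  refine ⟨z, fun j i hi => hz ⟨j, i, hi⟩, hΦ z ▸ hΦz, fun j => ?_⟩
  exact (norm_le_pi_norm (h - z) j).trans (hΦ h ▸ hhz)

theorem exists_uniform_isHoffmanConstant [Finite ι] [Finite J] (X : ι → V) :
    ∃ κ, 1 ≤ κ ∧ ∀ (C : Finset J) (T : C → Finset ι), IsHoffmanConstant X T κ := by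
  choose κ hκ using fun p : Σ C : Finset J, C → Finset ι => exists_isHoffmanConstant X p.2
  obtain ⟨M, hM⟩ := Finite.exists_le κ
  exact ⟨max M 1, le_max_right _ _, fun C T =>
    (hκ ⟨C, T⟩).mono ((hM _).trans (le_max_left _ _))⟩

end Hoffman

section Removal

variable {V ι : Type*} [NormedAddCommGroup V] [NormedSpace ℝ V]

theorem AffineFunctional.map_sum_smul {T : Finset ι} {w : ι → ℝ} (hw : ∑ i ∈ T, w i = 1)
    (X : ι → V) (f : AffineFunctional V) :
    f (∑ i ∈ T, w i • X i) = ∑ i ∈ T, w i * f (X i) := by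
  have h0 : f 0 = ∑ i ∈ T, w i * f 0 := by rw [← Finset.sum_mul, hw, one_mul]
  rw [f.apply_eq, map_sum, h0, ← Finset.sum_add_distrib]
  refine Finset.sum_congr rfl fun i _ => ?_
  rw [f.apply_eq (X i), map_smul, smul_eq_mul, mul_add]

theorem mem_subsampleHull_iff {X : ι → V} {T : Finset ι} {y : V} :
    y ∈ subsampleHull X T ↔
      ∃ w : ι → ℝ, (∀ i ∈ T, 0 ≤ w i) ∧ ∑ i ∈ T, w i = 1 ∧ ∑ i ∈ T, w i • X i = y := by
  classical
  constructor
  · refine fun hy => convexHull_min (t := {y | ∃ w : ι → ℝ, (∀ i ∈ T, 0 ≤ w i) ∧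
      ∑ i ∈ T, w i = 1 ∧ ∑ i ∈ T, w i • X i = y}) ?_ ?_ hy
    · rintro _ ⟨i, hi, rfl⟩
      have hi' : i ∈ T := hi
      exact ⟨Pi.single i 1, fun j _ => (Pi.single_nonneg (α := fun _ => ℝ)).2 zero_le_one j,
        by simp [Finset.sum_pi_single', hi'], by simp [Pi.single_apply, ite_smul, hi']⟩
    · rintro _ ⟨w, hw0, hw1, rfl⟩ _ ⟨w', hw0', hw1', rfl⟩ a b ha hb hab
      refine ⟨a • w + b • w', fun i hi => ?_, ?_, ?_⟩
      · exact add_nonneg (mul_nonneg ha (hw0 i hi)) (mul_nonneg hb (hw0' i hi))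
      · simp [Finset.sum_add_distrib, ← Finset.mul_sum, hw1, hw1', hab]
      · simp [Finset.sum_add_distrib, add_smul, mul_smul, Finset.smul_sum]
  · rintro ⟨w, hw0, hw1, rfl⟩
    exact (convex_convexHull ℝ _).sum_mem hw0 hw1 fun i hi => mem_subsampleHull hi

theorem exists_pos_weights_of_mem_subsampleHull {X : ι → V} {T : Finset ι} {y : V}
    (hy : y ∈ subsampleHull X T) :
    ∃ S ⊆ T, S.Nonempty ∧ y ∈ subsampleHull X S ∧ ∃ w : ι → ℝ, (∀ i ∈ S, 0 < w i) ∧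
      ∀ f : AffineFunctional V, f y = ∑ i ∈ S, w i * f (X i) := by
  obtain ⟨w, hw0, hw1, rfl⟩ := mem_subsampleHull_iff.1 hy
  let S := T.filter (0 < w ·)
  have hS : ∀ i ∈ S, 0 < w i := fun i hi => (Finset.mem_filter.1 hi).2
  have hzero : ∀ i ∈ T, i ∉ S → w i = 0 := fun i hi hiS =>
    le_antisymm (not_lt.1 fun h => hiS (Finset.mem_filter.2 ⟨hi, h⟩)) (hw0 i hi)
  have hsum : ∑ i ∈ S, w i = 1 := (Finset.sum_subset (T.filter_subset _) hzero).trans hw1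
  have hy' : ∑ i ∈ S, w i • X i = ∑ i ∈ T, w i • X i :=
    Finset.sum_subset (T.filter_subset _) fun i hi hiS => by rw [hzero i hi hiS, zero_smul]
  refine ⟨S, T.filter_subset _, Finset.nonempty_of_sum_ne_zero (hsum ▸ one_ne_zero),
    mem_subsampleHull_iff.2 ⟨w, fun i hi => (hS i hi).le, hsum, hy'⟩, w, hS, fun f => ?_⟩
  rw [← hy', f.map_sum_smul hsum]

theorem mem_subsampleHull_filter_eq_zero {X : ι → V} {T : Finset ι} {f : AffineFunctional V}
    (hf : ∀ i ∈ T, f (X i) ≤ 0) {y : V} (hy : y ∈ subsampleHull X T) (hfy : f y = 0) :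
    y ∈ subsampleHull X {i ∈ T | f (X i) = 0} := by
  obtain ⟨S, hST, -, hyS, w, hw, hwf⟩ := exists_pos_weights_of_mem_subsampleHull hy
  have hterm : ∀ i ∈ S, w i * f (X i) = 0 :=
    (Finset.sum_eq_zero_iff_of_nonpos fun i hi =>
      mul_nonpos_of_nonneg_of_nonpos (hw i hi).le (hf i (hST hi))).1 ((hwf f).symm.trans hfy)
  refine subsampleHull_mono X (fun i hi => Finset.mem_filter.2 ⟨hST hi, ?_⟩) hyS
  exact (mul_eq_zero.1 (hterm i hi)).resolve_left (hw i hi).ne'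

theorem exists_coordinate_ne_zero {X : ι → V} {S : Finset ι}
    (hS : ∀ v ∈ S, ∃ f : AffineFunctional V, f (X v) = 1 ∧ ∀ i ∈ S, i ≠ v → f (X i) = 0)
    {y : V} (hy : y ∈ subsampleHull X S) :
    ∃ (v : ι) (f : AffineFunctional V), (∀ i ∈ S, i ≠ v → f (X i) = 0) ∧ f y ≠ 0 := by
  obtain ⟨Q, hQS, ⟨v, hvQ⟩, -, w, hw, hwf⟩ :=
    exists_pos_weights_of_mem_subsampleHull hy
  obtain ⟨f, hfv, hf⟩ := hS v (hQS hvQ)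
  refine ⟨v, f, hf, ?_⟩
  rw [hwf, Finset.sum_eq_single_of_mem v hvQ fun i hi hiv => by rw [hf i (hQS hi) hiv, mul_zero],
    hfv, mul_one]
  exact (hw v hvQ).ne'

theorem sum_update_sub_one {A : Type*} [Fintype A] [DecidableEq A] {ρ : A → ℕ} {a : A}
    (ha : ρ a ≠ 0) : ∑ b, Function.update ρ a (ρ a - 1) b + 1 = ∑ b, ρ b := by
  have := Finset.add_sum_erase _ ρ (Finset.mem_univ a)
  rw [Finset.sum_update_of_mem (Finset.mem_univ a), ← Finset.erase_eq]
  omega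

/-- After any removal of at most `ρ a` points from each `S a`, the remaining hulls have a common
point at which all members of `N` vanish. -/
def HasRobustCommonZero [DecidableEq ι] {A : Type*} (X : ι → V) (S : A → Finset ι) (ρ : A → ℕ)
    (N : Submodule ℝ (AffineFunctional V)) : Prop :=
  ∀ R : A → Finset ι, (∀ a, #(R a) ≤ ρ a) →
    ∃ y, N ≤ LinearMap.ker (AffineFunctional.eval y) ∧ ∀ a, y ∈ subsampleHull X (S a \ R a)

namespace HasRobustCommonZero

variable [DecidableEq ι] {A : Type*} {X : ι → V} {S : A → Finset ι} {ρ : A → ℕ}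
  {N : Submodule ℝ (AffineFunctional V)}

theorem exists_mem_subsampleHull (h : HasRobustCommonZero X S ρ N) :
    ∃ y, N ≤ LinearMap.ker (AffineFunctional.eval y) ∧ ∀ a, y ∈ subsampleHull X (S a) := by
  simpa only [Finset.sdiff_empty] using h (fun _ => ∅) fun _ => Nat.zero_le _

theorem update_erase [DecidableEq A] (h : HasRobustCommonZero X S ρ N) {a : A} (ha : ρ a ≠ 0)
    {v : ι} {f : AffineFunctional V} (hf : ∀ i ∈ S a, i ≠ v → f (X i) = 0) :
    HasRobustCommonZero X (Function.update S a ((S a).erase v))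
      (Function.update ρ a (ρ a - 1)) (N ⊔ Submodule.span ℝ {f}) := fun R hR => by
  obtain ⟨y, hyN, hyS⟩ := h (Function.update R a (insert v (R a))) fun b => by
    rcases eq_or_ne b a with rfl | hba
    · have := hR b
      have := Finset.card_insert_le v (R b)
      simp only [Function.update_self] at *
      omega
    · simpa only [Function.update_of_ne hba] using hR b
  have hfy : f y = 0 := subsampleHull_subset (f.convex_eq 0) (fun i hi => by
    simp only [Function.update_self, Finset.mem_sdiff, Finset.mem_insert, not_or] at hi
    exact hf i hi.1 hi.2.1) (hyS a)
  refine ⟨y, sup_le hyN ((Submodule.span_singleton_le_iff_mem _ _).2 hfy), fun b => ?_⟩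
  have hb := hyS b
  rcases eq_or_ne b a with rfl | hba
  · rwa [Function.update_self, Finset.sdiff_insert, ← Finset.erase_sdiff_comm,
      ← Function.update_self b ((S b).erase v) S] at hb
  · rwa [Function.update_of_ne hba] at hb ⊢

/-- Deleting from `S a` a vertex `v` of positive weight at the common zero forces one more affine
functional, the barycentric coordinate of `v`, to vanish at the next common zero. -/
theorem sum_add_finrank_le [Fintype A] [FiniteDimensional ℝ V]
    (h : HasRobustCommonZero X S ρ N)
    (hS : ∀ a, ∀ v ∈ S a, ∃ f : AffineFunctional V, f (X v) = 1 ∧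
      ∀ i ∈ S a, i ≠ v → f (X i) = 0) :
    ∑ a, ρ a + Module.finrank ℝ N ≤ Module.finrank ℝ V := by
  classical
  induction hn : ∑ a, ρ a generalizing S ρ N with
  | zero =>
    obtain ⟨y, hy, -⟩ := h.exists_mem_subsampleHull
    have hN : N ≠ ⊤ := fun h =>
      one_ne_zero (α := ℝ) (hy (h ▸ Submodule.mem_top : ContinuousAffineMap.const ℝ V 1 ∈ N))
    have := Submodule.finrank_lt hN
    rw [AffineFunctional.finrank_eq] at this
    omega
  | succ n ih =>
    obtain ⟨a, -, ha⟩ := Finset.exists_ne_zero_of_sum_ne_zero (hn.trans_ne n.succ_ne_zero)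
    obtain ⟨y, hyN, hyS⟩ := h.exists_mem_subsampleHull
    obtain ⟨v, f, hf, hfy⟩ := exists_coordinate_ne_zero (hS a) (hyS a)
    have hfN : N < N ⊔ Submodule.span ℝ {f} := le_sup_left.lt_of_ne fun h => hfy <| hyN <|
      (h ▸ Submodule.mem_sup_right (Submodule.mem_span_singleton_self f) : f ∈ N)
    have hsub : ∀ b, Function.update S a ((S a).erase v) b ⊆ S b :=
      update_le_iff.2 ⟨Finset.erase_subset _ _, fun _ _ => le_rfl⟩
    have hsum := sum_update_sub_one ha
    have hle := ih (h.update_erase ha hf)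
      (fun b w hw => (hS b w (hsub b hw)).imp fun g hg =>
        ⟨hg.1, fun i hi => hg.2 i (hsub b hi)⟩) (by omega)
    have := Submodule.finrank_lt_finrank_of_lt hfN
    omega

end HasRobustCommonZero

variable [FiniteDimensional ℝ V] [Fintype ι]

/-- General position: no hyperplane contains more than `dim V` sample points. A nonzero constant has
empty zero set, so quantifying over all `f ≠ 0` adds no condition. -/
def IsInGeneralPosition (X : ι → V) : Prop :=
  ∀ f : AffineFunctional V, f ≠ 0 → #{i | f (X i) = 0} ≤ Module.finrank ℝ V

theorem IsInGeneralPosition.exists_apply_eq_single {X : ι → V} (hX : IsInGeneralPosition X)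
    (hι : Module.finrank ℝ V + 1 ≤ Fintype.card ι) {S : Finset ι}
    (hS : #S ≤ Module.finrank ℝ V + 1) {v : ι} (hv : v ∈ S) :
    ∃ f : AffineFunctional V, f (X v) = 1 ∧ ∀ i ∈ S, i ≠ v → f (X i) = 0 := by
  classical
  obtain ⟨S', hSS', hS'⟩ := Finset.exists_superset_card_eq hS hι
  let evS : AffineFunctional V →ₗ[ℝ] (S' → ℝ) := LinearMap.pi fun i => AffineFunctional.eval (X i)
  have hinj : Function.Injective evS := (injective_iff_map_eq_zero evS).2 fun f hf => by
    by_contra hf0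
    have : S' ⊆ ({i | f (X i) = 0} : Finset ι) := fun i hi =>
      Finset.mem_filter.2 ⟨Finset.mem_univ _, congrFun hf ⟨i, hi⟩⟩
    have := (Finset.card_le_card this).trans (hX f hf0)
    omega
  have hsurj : Function.Surjective evS :=
    (LinearMap.injective_iff_surjective_of_finrank_eq_finrank
      (by simp [AffineFunctional.finrank_eq, hS'])).1 hinj
  obtain ⟨f, hf⟩ := hsurj (Pi.single ⟨v, hSS' hv⟩ 1)
  refine ⟨f, ?_, fun i hi hiv => ?_⟩
  · exact (congrFun hf ⟨v, hSS' hv⟩).trans (Pi.single_eq_same _ _)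
  · refine (congrFun hf ⟨i, hSS' hi⟩).trans (Pi.single_eq_of_ne (fun h => hiv ?_) _)
    exact congrArg Subtype.val h

end Removal

section Slack

theorem card_sub_one_le_finrank_span {V J : Type*} [AddCommGroup V] [Module ℝ V] [Fintype J]
    {z : J → V} (hz : ∀ β : J → ℝ, ∑ j, β j • z j = 0 → ∀ i j, β i = β j) :
    Fintype.card J - 1 ≤ Module.finrank ℝ (Submodule.span ℝ (Set.range z)) := by
  let L : (J → ℝ) →ₗ[ℝ] V := Fintype.linearCombination ℝ z
  have hker : LinearMap.ker L ≤ Submodule.span ℝ {(1 : J → ℝ)} := fun β hβ => by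
    have hconst := hz β ((Fintype.linearCombination_apply ℝ z β).symm.trans hβ)
    rcases isEmpty_or_nonempty J with _ | ⟨⟨j₀⟩⟩
    · exact (Subsingleton.elim 0 β) ▸ Submodule.zero_mem _
    · refine Submodule.mem_span_singleton.2 ⟨β j₀, funext fun j => ?_⟩
      simp [hconst j j₀]
  have hdim := L.finrank_range_add_finrank_ker
  have := (Submodule.finrank_mono hker).trans (finrank_span_le_card ({1} : Set (J → ℝ)))
  rw [Set.toFinset_singleton, Finset.card_singleton] at this
  rw [Fintype.range_linearCombination, Module.finrank_fintype_fun_eq_card] at hdim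
  omega

variable {V ι A : Type*} [NormedAddCommGroup V] [NormedSpace ℝ V] [FiniteDimensional ℝ V]
  [Nontrivial V] [Fintype ι] [DecidableEq ι] [Fintype A] {X : ι → V} {k : ℕ}

/-- Deleting up to `k - 1 - #(T a)ᶜ` points from each `T a` leaves the hulls with a common point, at
which all `z a` vanish. -/
theorem HasDeepProjections.sum_slack_add_finrank_le (hX : HasDeepProjections X k)
    (hGP : IsInGeneralPosition X) (hι : Module.finrank ℝ V + 1 ≤ Fintype.card ι)
    (hA : Fintype.card A ≤ Module.finrank ℝ V) {T : A → Finset ι} (hT : ∀ a, #(T a)ᶜ < k)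
    {z : A → AffineFunctional V} (hzT : ∀ a, ∀ i ∈ T a, z a (X i) ≤ 0) (hz0 : ∀ a, z a ≠ 0)
    (hz : ∀ y, (∀ a, z a y ≤ 0) → ∀ a, z a y = 0) :
    ∑ a, (k - 1 - #(T a)ᶜ) + Module.finrank ℝ (Submodule.span ℝ (Set.range z)) ≤
      Module.finrank ℝ V := by
  refine HasRobustCommonZero.sum_add_finrank_le (X := X) (S := fun a => {i ∈ T a | z a (X i) = 0})
    (fun R hR => ?_) fun a v hv => hGP.exists_apply_eq_single hι ?_ hv
  swap
  · exact ((Finset.card_le_card (Finset.filter_subset_filter _ (T a).subset_univ)).trans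
      (hGP _ (hz0 a))).trans (Nat.le_succ _)
  have hTR : ∀ a, #(T a \ R a)ᶜ < k := fun a => by
    have := Finset.card_union_le (T a)ᶜ (R a)
    have := hR a
    have := hT a
    rw [sdiff_eq, compl_inf, compl_compl, Finset.sup_eq_union]
    omega
  obtain ⟨y, hy⟩ := hX.iInter_subsampleHull_nonempty hA hTR
  have hyR : ∀ a, y ∈ subsampleHull X (T a \ R a) := Set.mem_iInter.1 hy
  have hzy : ∀ a, z a y ≤ 0 := fun a =>
    subsampleHull_subset ((z a).convex_le 0) (fun i hi => hzT a i (Finset.mem_sdiff.1 hi).1) (hyR a)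
  have hzy0 : ∀ a, z a y = 0 := hz y hzy
  refine ⟨y, Submodule.span_le.2 (Set.range_subset_iff.2 hzy0), fun a => ?_⟩
  have := mem_subsampleHull_filter_eq_zero
    (fun i hi => hzT a i (Finset.mem_sdiff.1 hi).1) (hyR a) (hzy0 a)
  refine subsampleHull_mono X (fun i hi => ?_) this
  simp only [Finset.mem_filter, Finset.mem_sdiff] at hi ⊢
  exact ⟨⟨hi.1.1, hi.2⟩, hi.1.2⟩

theorem HasDeepProjections.sum_slack_le_one [Nontrivial A] (hX : HasDeepProjections X k)
    (hGP : IsInGeneralPosition X) (hι : Module.finrank ℝ V + 1 ≤ Fintype.card ι)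
    (hA : Fintype.card A ≤ Module.finrank ℝ V) {T : A → Finset ι} (hT : ∀ a, #(T a)ᶜ < k)
    {z : A → AffineFunctional V} (hzT : ∀ a, ∀ i ∈ T a, z a (X i) ≤ 0) (hzsum : ∑ a, z a = 0)
    (hz : ∀ β : A → ℝ, ∑ a, β a • z a = 0 → ∀ a b, β a = β b) :
    ∑ a, (k - 1 - #(T a)ᶜ) ≤ 1 := by
  classical
  have hz0 : ∀ a, z a ≠ 0 := fun a ha => by
    obtain ⟨b, hb⟩ := exists_ne a
    simpa [hb] using hz (Pi.single a 1) (by simp [Pi.single_apply, ite_smul, ha]) a b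
  have hzero : ∀ y, (∀ a, z a y ≤ 0) → ∀ a, z a y = 0 := fun y hy a => by
    refine (Finset.sum_eq_zero_iff_of_nonpos fun a _ => hy a).1 ?_ a (Finset.mem_univ a)
    rw [← AffineFunctional.sum_apply, hzsum]
    rfl
  by_contra! hslack
  obtain ⟨a₀, -, ha₀⟩ := Finset.exists_ne_zero_of_sum_ne_zero (by omega :
    ∑ a, (k - 1 - #(T a)ᶜ) ≠ 0)
  let m := Module.finrank ℝ V - Fintype.card A
  let copies : A ⊕ Fin m → A := Sum.elim id fun _ => a₀
  have hcopies : Set.range (z ∘ copies) = Set.range z :=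
    Function.Surjective.range_comp (fun a => ⟨Sum.inl a, rfl⟩) z
  have hdim := hX.sum_slack_add_finrank_le hGP hι (T := T ∘ copies) (z := z ∘ copies)
    (by simp [m]; omega) (fun a => hT _) (fun a => hzT _) (fun a => hz0 _)
    (fun y hy a => hzero y (fun b => hy (Sum.inl b)) _)
  have hrank := card_sub_one_le_finrank_span hz
  rw [hcopies, Fintype.sum_sum_type] at hdim
  simp only [Function.comp_apply, copies, Sum.elim_inl, Sum.elim_inr, id, Finset.sum_const,
    Finset.card_univ, Fintype.card_fin, smul_eq_mul] at hdim
  have := Nat.mul_le_mul_left m (Nat.one_le_iff_ne_zero.2 ha₀)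
  omega

end Slack

section ThinCover

variable {V ι J : Type*} [NormedAddCommGroup V] [NormedSpace ℝ V] [FiniteDimensional ℝ V]
  [Nontrivial V] [Fintype ι] [Fintype J] {X : ι → V} {k : ℕ} {f : J → AffineFunctional V}

namespace IsThinCover

theorem exists_forall_ne_nonpos (hf : IsThinCover X k f) (hX : HasDeepProjections X k)
    (hJ : Fintype.card J = Module.finrank ℝ V + 1) (j : J) :
    ∃ y ∈ subsampleHull X Finset.univ, ∀ i ≠ j, f i y ≤ 0 := by
  classical
  have hcard : Fintype.card {i // i ≠ j} = Module.finrank ℝ V := by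
    rw [Fintype.card_subtype_compl, Fintype.card_subtype_eq, hJ, Nat.add_sub_cancel]
  let T : {i // i ≠ j} → Finset ι := fun i => {i' | f i (X i') ≤ 0}
  obtain ⟨y, hy⟩ := hX.iInter_subsampleHull_nonempty (T := T) hcard.le fun i => by
    simpa [T, Finset.compl_filter] using hf.card_pos_lt i
  have hyT : ∀ i, y ∈ subsampleHull X (T i) := Set.mem_iInter.1 hy
  obtain ⟨i₀⟩ : Nonempty {i // i ≠ j} := Fintype.card_pos_iff.1 (hcard ▸ Module.finrank_pos)
  refine ⟨y, subsampleHull_mono X (Finset.subset_univ _) (hyT i₀), fun i hi => ?_⟩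
  exact subsampleHull_subset ((f i).convex_le 0) (fun i' hi' => (Finset.mem_filter.1 hi').2)
    (hyT ⟨i, hi⟩)

theorem exists_forall_le_sum_apply (hf : IsThinCover X k f) (hX : HasDeepProjections X k)
    (hJ : Fintype.card J = Module.finrank ℝ V + 1) (q : J → ℝ) :
    ∃ y ∈ subsampleHull X Finset.univ, ∀ i, q i ≤ (∑ j, q j • f j) y := by
  have : Nonempty J := Fintype.card_pos_iff.1 (hJ ▸ Nat.succ_pos _)
  obtain ⟨j, hj⟩ := Finite.exists_max q
  obtain ⟨y, hyX, hy⟩ := hf.exists_forall_ne_nonpos hX hJ j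
  refine ⟨y, hyX, fun i => (hj i).trans ?_⟩
  have hterm : ∀ i, 0 ≤ (q i - q j) * f i y := fun i => by
    rcases eq_or_ne i j with rfl | hi
    · rw [sub_self, zero_mul]
    · exact mul_nonneg_of_nonpos_of_nonpos (sub_nonpos.2 (hj i)) (hy i hi)
  have hsum := Finset.sum_nonneg fun i (_ : i ∈ Finset.univ) => hterm i
  simp only [sub_mul, Finset.sum_sub_distrib, ← Finset.mul_sum, hf.sum_eq_one] at hsum
  simp only [AffineFunctional.sum_apply, ContinuousAffineMap.smul_apply, smul_eq_mul]
  linarith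

theorem exists_pos (hf : IsThinCover X k f) (hX : HasDeepProjections X k)
    (hJ : Fintype.card J = Module.finrank ℝ V + 1) (j : J) : ∃ i, 0 < f j (X i) := by
  classical
  by_contra! hj
  obtain ⟨y, hyX, hy⟩ := hf.exists_forall_le_sum_apply hX hJ (Pi.single j 1)
  have hyj : f j y ≤ 0 := subsampleHull_subset ((f j).convex_le 0) (fun i _ => hj i) hyX
  have := hy j
  simp only [Pi.single_apply, ite_smul, one_smul, zero_smul, Finset.sum_ite_eq', Finset.mem_univ,
    if_true] at this
  linarith

theorem linearIndependent (hf : IsThinCover X k f) (hX : HasDeepProjections X k)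
    (hJ : Fintype.card J = Module.finrank ℝ V + 1) : LinearIndependent ℝ f := by
  have hle : ∀ q : J → ℝ, ∑ j, q j • f j = 0 → ∀ i, q i ≤ 0 := fun q hq i => by
    obtain ⟨y, -, hy⟩ := hf.exists_forall_le_sum_apply hX hJ q
    simpa [hq] using hy i
  refine Fintype.linearIndependent_iff.2 fun q hq i => le_antisymm (hle q hq i) ?_
  simpa using hle (-q) (by simp [hq]) i

theorem exists_eq_sum_smul (hf : IsThinCover X k f) (hX : HasDeepProjections X k)
    (hJ : Fintype.card J = Module.finrank ℝ V + 1) (g : AffineFunctional V) :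
    ∃ q : J → ℝ, ∑ j, q j • f j = g := by
  have hspan := (hf.linearIndependent hX hJ).span_eq_top_of_card_eq_finrank'
    (hJ.trans AffineFunctional.finrank_eq.symm)
  exact (Submodule.mem_span_range_iff_exists_fun ℝ).1 (hspan ▸ Submodule.mem_top)

end IsThinCover

end ThinCover

section GrowsAlong

variable {V ι J : Type*} [NormedAddCommGroup V] [NormedSpace ℝ V]
  {g : AffineFunctional V} {x : V} {K R : ℝ}

/-- The slope of `g` along `x` is positive and at least the fraction `1 / K` of the norm of `g`, so
that `g` separates `x` from bounded sets as soon as `‖x‖` is large compared with `K`. -/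
def GrowsAlong (g : AffineFunctional V) (x : V) (K : ℝ) : Prop :=
  0 < g.contLinear x ∧ ‖g‖ * ‖x‖ ≤ K * g.contLinear x

theorem AffineFunctional.abs_contLinear_le_norm_mul (g : AffineFunctional V) {y : V}
    (hy : ‖y‖ ≤ R) : |g.contLinear y| ≤ ‖g‖ * R :=
  (g.contLinear.le_opNorm y).trans
    (mul_le_mul g.norm_contLinear_le hy (norm_nonneg y) (norm_nonneg g))

theorem norm_le_of_mem_subsampleHull {X : ι → V} {T : Finset ι} (hR : ∀ i ∈ T, ‖X i‖ ≤ R) {y : V}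
    (hy : y ∈ subsampleHull X T) : ‖y‖ ≤ R :=
  mem_closedBall_zero_iff.1 <| subsampleHull_subset (convex_closedBall 0 R)
    (fun i hi => mem_closedBall_zero_iff.2 (hR i hi)) hy

theorem GrowsAlong.pos_and_lt (hg : GrowsAlong g x K) (hR : 0 ≤ R) (hx : K * (R + 1) < ‖x‖) :
    0 < g x ∧ ∀ y, ‖y‖ ≤ R → g y < g x := by
  obtain ⟨hpos, hle⟩ := hg
  have hg0 : 0 < ‖g‖ := norm_pos_iff.2 fun h => by simp [h] at hpos
  have hx0 : 0 < ‖x‖ := norm_pos_iff.2 fun h => by simp [h] at hpos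
  have hK : 0 < K := pos_of_mul_pos_left ((mul_pos hg0 hx0).trans_le hle) hpos.le
  have hslope : ‖g‖ * (R + 1) < g.contLinear x := by
    have := mul_lt_mul_of_pos_left hx hg0
    refine lt_of_mul_lt_mul_left (a := K) ?_ hK.le
    linarith
  have hconst : |g 0| ≤ ‖g‖ := g.norm_image_zero_le
  refine ⟨?_, fun y hy => ?_⟩
  · rw [g.apply_eq]
    have := mul_nonneg hg0.le hR
    linarith [neg_abs_le (g 0)]
  · rw [g.apply_eq, g.apply_eq x]
    linarith [le_abs_self (g.contLinear y), g.abs_contLinear_le_norm_mul hy]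

theorem growsAlong_of_sign_change {l : StrongDual ℝ V} (hl : ‖l‖ ≤ 1) (hlx : l x = ‖x‖)
    (hx : x ≠ 0) {s : ℝ} (hs : 0 < s) (hgl : g.contLinear = s • l)
    {y₀ y₁ : V} (hy₀ : ‖y₀‖ ≤ R) (hy₁ : ‖y₁‖ ≤ R) (hg₀ : g y₀ ≤ 0) (hg₁ : 0 ≤ g y₁) :
    GrowsAlong g x (R + 1) := by
  have hR : 0 ≤ R := (norm_nonneg y₀).trans hy₀
  have hslope : g.contLinear x = s * ‖x‖ := by
    rw [hgl, _root_.smul_apply, hlx, smul_eq_mul]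
  have hlin : ‖g.contLinear‖ ≤ s := by
    rw [hgl, norm_smul, Real.norm_of_nonneg hs.le]
    exact mul_le_of_le_one_right hs.le hl
  have hlinR : ∀ y, ‖y‖ ≤ R → |g.contLinear y| ≤ s * R := fun y hy =>
    (g.contLinear.le_opNorm y).trans (mul_le_mul hlin hy (norm_nonneg y) hs.le)
  have hconst : |g 0| ≤ s * R := by
    rw [g.apply_eq] at hg₀ hg₁
    refine abs_le.2 ⟨?_, ?_⟩
    · linarith [(abs_le.1 (hlinR y₁ hy₁)).2]
    · linarith [(abs_le.1 (hlinR y₀ hy₀)).1]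
  have hnorm : ‖g‖ ≤ s * (R + 1) := by
    rw [ContinuousAffineMap.norm_def]
    exact max_le (hconst.trans (by linarith)) (hlin.trans (by nlinarith))
  refine ⟨hslope ▸ mul_pos hs (norm_pos_iff.2 hx), ?_⟩
  calc ‖g‖ * ‖x‖ ≤ s * (R + 1) * ‖x‖ := by gcongr
    _ = (R + 1) * g.contLinear x := by rw [hslope]; ring

variable [Fintype ι] [Fintype J] {X : ι → V} {k : ℕ} {f : J → AffineFunctional V}

theorem IsThinCover.exists_nonneg_sum_eq_const_add_smul [Nonempty J] (hf : IsThinCover X k f)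
    {q : J → ℝ} (hq : ∀ j, q j < 0) :
    ∃ (j₀ : J) (θ : J → ℝ), (∀ j, 0 ≤ θ j) ∧ θ j₀ = 0 ∧ ∃ s > (0 : ℝ),
      ∑ j, θ j • f j = ContinuousAffineMap.const ℝ V 1 + s • ∑ j, q j • f j := by
  obtain ⟨j₀, hj₀⟩ := Finite.exists_min q
  have hf1 : ∑ j, f j = ContinuousAffineMap.const ℝ V 1 :=
    ContinuousAffineMap.ext fun y => (AffineFunctional.sum_apply _ f y).trans (hf.sum_eq_one y)
  refine ⟨j₀, fun i => 1 - q i / q j₀, fun i => ?_, ?_, -(q j₀)⁻¹,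
    neg_pos.2 (inv_lt_zero.2 (hq j₀)), ?_⟩
  · exact sub_nonneg.2 ((div_le_one_of_neg (hq j₀)).2 (hj₀ i))
  · exact sub_eq_zero.2 (div_self (hq j₀).ne).symm
  · rw [← hf1, Finset.smul_sum, ← Finset.sum_add_distrib]
    exact Finset.sum_congr rfl fun j _ => by module

/-- Write `l - ‖x‖` in the basis `f`, with `l` norming `x`. Its coefficients are negative, so a
multiple of it added to `1 = ∑ j, f j` has nonnegative coefficients, one of which vanishes. -/
theorem IsThinCover.exists_growsAlong [FiniteDimensional ℝ V] [Nontrivial V]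
    (hf : IsThinCover X k f) (hX : HasDeepProjections X k)
    (hJ : Fintype.card J = Module.finrank ℝ V + 1) (hR : ∀ i, ‖X i‖ ≤ R) (hx : R < ‖x‖) :
    ∃ (j₀ : J) (θ : J → ℝ), (∀ j, 0 ≤ θ j) ∧ θ j₀ = 0 ∧
      GrowsAlong (∑ j, θ j • f j) x (R + 1) := by
  have hhull : ∀ {y}, y ∈ subsampleHull X Finset.univ → ‖y‖ ≤ R :=
    norm_le_of_mem_subsampleHull fun i _ => hR i
  obtain ⟨l, hl, hlx⟩ := exists_dual_vector'' ℝ x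
  obtain ⟨q, hq⟩ := hf.exists_eq_sum_smul hX hJ
    (l.toContinuousAffineMap - ContinuousAffineMap.const ℝ V ‖x‖)
  have hq0 : ∀ i, q i < 0 := fun i => by
    obtain ⟨y, hyX, hy⟩ := hf.exists_forall_le_sum_apply hX hJ q
    have hyl : l y ≤ ‖y‖ := (le_abs_self _).trans (l.le_of_opNorm_le hl y |>.trans_eq (one_mul _))
    have : (∑ j, q j • f j) y = l y - ‖x‖ := by rw [hq]; rfl
    linarith [hy i, hhull hyX]
  have : Nonempty J := Fintype.card_pos_iff.1 (hJ ▸ Nat.succ_pos _)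
  obtain ⟨j₀, θ, hθ, hθj₀, s, hs, hsum⟩ := hf.exists_nonneg_sum_eq_const_add_smul hq0
  obtain ⟨y₁, hy₁, hθy₁⟩ := hf.exists_forall_le_sum_apply hX hJ θ
  obtain ⟨y₀, hy₀, hθy₀⟩ := hf.exists_forall_le_sum_apply hX hJ (-θ)
  have hx0 : x ≠ 0 := norm_pos_iff.1 (((norm_nonneg y₀).trans (hhull hy₀)).trans_lt hx)
  have hlin : (∑ j, θ j • f j).contLinear = s • l := by
    rw [hsum, hq]
    ext v
    simp
  have hle : (∑ j, θ j • f j) y₀ ≤ 0 := by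
    have := hθy₀ j₀
    simp only [Pi.neg_apply, hθj₀, neg_zero, neg_smul, Finset.sum_neg_distrib,
      ContinuousAffineMap.neg_apply] at this
    linarith
  exact ⟨j₀, θ, hθ, hθj₀, growsAlong_of_sign_change hl hlx hx0 hs hlin (hhull hy₀) (hhull hy₁) hle
    ((hθ j₀).trans (hθy₁ j₀))⟩

end GrowsAlong

section Sparsification

theorem exists_minimal_subset {J : Type*} {P : Finset J → ℝ → Prop} {μ : ℝ} (hμ : 1 ≤ μ)
    {C₀ : Finset J} {K₀ : ℝ} (hK₀ : 0 ≤ K₀) (h : P C₀ K₀) :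
    ∃ C ⊆ C₀, ∃ K ≤ μ ^ #C₀ * K₀, P C K ∧ ∀ C' ⊂ C, ¬ P C' (μ * K) := by
  classical
  induction C₀ using Finset.strongInduction generalizing K₀ with
  | H C₀ ih =>
  by_cases hmin : ∀ C' ⊂ C₀, ¬ P C' (μ * K₀)
  · exact ⟨C₀, subset_rfl, K₀, le_mul_of_one_le_left hK₀ (one_le_pow₀ hμ), h, hmin⟩
  push Not at hmin
  obtain ⟨C', hC', hPC'⟩ := hmin
  obtain ⟨C, hC, K, hK, hPC⟩ := ih C' hC' (by positivity) hPC'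
  refine ⟨C, hC.trans hC'.subset, K, hK.trans ?_, hPC⟩
  rw [← mul_assoc, ← pow_succ]
  gcongr
  exact Finset.card_lt_card hC'

theorem exists_normalized_relation {W J : Type*} [AddCommGroup W] [Module ℝ W] [Fintype J]
    {z : J → W} (hz : ∑ j, z j = 0) {β : J → ℝ} (hβ : ∑ j, β j • z j = 0) {a b : J}
    (hab : β a ≠ β b) :
    ∃ γ : J → ℝ, (∀ j, γ j ∈ Set.Icc 0 1) ∧ ∑ j, γ j • z j = 0 ∧ (∃ j, γ j = 0) ∧
      ∃ j, γ j = 1 := by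
  have : Nonempty J := ⟨a⟩
  obtain ⟨i₀, hi₀⟩ := Finite.exists_min β
  obtain ⟨i₁, hi₁⟩ := Finite.exists_max β
  have hlt : 0 < β i₁ - β i₀ := by
    rcases hab.lt_or_gt with h | h
    · linarith [hi₀ a, hi₁ b]
    · linarith [hi₀ b, hi₁ a]
  refine ⟨fun j => (β i₁ - β i₀)⁻¹ * (β j - β i₀), fun j => ⟨?_, ?_⟩, ?_, ⟨i₀, ?_⟩, i₁, ?_⟩
  · exact mul_nonneg (inv_nonneg.2 hlt.le) (sub_nonneg.2 (hi₀ j))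
  · exact (inv_mul_le_one₀ hlt).2 (sub_le_sub_right (hi₁ j) _)
  · simp only [mul_smul, sub_smul, ← Finset.smul_sum, Finset.sum_sub_distrib, hβ, hz, smul_zero,
      sub_zero]
  · simp only [sub_self, mul_zero]
  · exact inv_mul_cancel₀ hlt.ne'

theorem norm_sum_smul_le_of_sum_smul_eq_zero {W J : Type*} [NormedAddCommGroup W]
    [NormedSpace ℝ W] [Fintype J] {h z : J → W} {B : ℝ} (hhz : ∀ j, ‖h j - z j‖ ≤ B) {γ : J → ℝ}
    (hγ : ∀ j, γ j ∈ Set.Icc 0 1) (hγz : ∑ j, γ j • z j = 0) :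
    ‖∑ j, γ j • h j‖ ≤ Fintype.card J * B := by
  have hsub : ∑ j, γ j • h j = ∑ j, γ j • (h j - z j) := by
    simp only [smul_sub, Finset.sum_sub_distrib, hγz, sub_zero]
  have hterm : ∀ j ∈ Finset.univ, ‖γ j • (h j - z j)‖ ≤ B := fun j _ => by
    rw [norm_smul, Real.norm_of_nonneg (hγ j).1]
    exact (mul_le_of_le_one_left (norm_nonneg _) (hγ j).2).trans (hhz j)
  rw [hsub]
  exact (norm_sum_le_of_le _ hterm).trans_eq (by simp)

variable {V J : Type*} [NormedAddCommGroup V] [NormedSpace ℝ V] [Fintype J]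

/-- Of the two parts `∑ γ j • h j` and `∑ (1 - γ j) • h j` of `g`, one carries half of the slope of
`g` at `x`, while both have norm of the order of `‖g‖`. -/
theorem GrowsAlong.exists_sparser {h z : J → AffineFunctional V} {x : V} {K κ : ℝ} (hκ : 0 ≤ κ)
    (hK : 0 ≤ K) (hg : GrowsAlong (∑ j, h j) x K) (hz : ∑ j, z j = 0)
    (hhz : ∀ j, ‖h j - z j‖ ≤ κ * ‖∑ j, h j‖) {β : J → ℝ} (hβ : ∑ j, β j • z j = 0) {a b : J}
    (hab : β a ≠ β b) :
    ∃ γ : J → ℝ, (∀ j, 0 ≤ γ j) ∧ (∃ j, γ j = 0) ∧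
      GrowsAlong (∑ j, γ j • h j) x (2 * (Fintype.card J * κ) * K) := by
  obtain ⟨γ, hγ, hγz, h0, h1⟩ := exists_normalized_relation hz hβ hab
  obtain ⟨hpos, hle⟩ := hg
  set g := ∑ j, h j
  have hgrows : ∀ δ : J → ℝ, (∀ j, δ j ∈ Set.Icc 0 1) → ∑ j, δ j • z j = 0 →
      g.contLinear x ≤ 2 * (∑ j, δ j • h j).contLinear x →
      GrowsAlong (∑ j, δ j • h j) x (2 * (Fintype.card J * κ) * K) := fun δ hδ hδz hhalf => by
    refine ⟨by linarith, ?_⟩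
    calc ‖∑ j, δ j • h j‖ * ‖x‖ ≤ Fintype.card J * (κ * ‖g‖) * ‖x‖ := by
          gcongr
          exact norm_sum_smul_le_of_sum_smul_eq_zero hhz hδ hδz
      _ = Fintype.card J * κ * (‖g‖ * ‖x‖) := by ring
      _ ≤ Fintype.card J * κ * (K * (2 * (∑ j, δ j • h j).contLinear x)) :=
          mul_le_mul_of_nonneg_left
            (hle.trans (mul_le_mul_of_nonneg_left hhalf hK)) (by positivity)
      _ = 2 * (Fintype.card J * κ) * K * (∑ j, δ j • h j).contLinear x := by ring
  have hsplit : g = ∑ j, γ j • h j + ∑ j, (1 - γ j) • h j := by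
    simp only [sub_smul, one_smul, Finset.sum_sub_distrib, g, add_sub_cancel]
  have hslope : g.contLinear x =
      (∑ j, γ j • h j).contLinear x + (∑ j, (1 - γ j) • h j).contLinear x := by
    rw [hsplit]
    rfl
  rcases le_total (g.contLinear x) (2 * (∑ j, γ j • h j).contLinear x) with hhalf | hhalf
  · exact ⟨γ, fun j => (hγ j).1, h0, hgrows γ hγ hγz hhalf⟩
  · have hγ' : ∀ j, 1 - γ j ∈ Set.Icc (0 : ℝ) 1 := fun j =>
      ⟨sub_nonneg.2 (hγ j).2, sub_le_self _ (hγ j).1⟩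
    refine ⟨fun j => 1 - γ j, fun j => (hγ' j).1, h1.imp fun j hj => sub_eq_zero.2 hj.symm,
      hgrows _ hγ' ?_ (by linarith)⟩
    simp only [sub_smul, one_smul, Finset.sum_sub_distrib, hz, hγz, sub_zero]

end Sparsification

section SeparatingCombination

variable {V ι J : Type*} [NormedAddCommGroup V] [NormedSpace ℝ V]

theorem GrowsAlong.mono {g : AffineFunctional V} {x : V} {K K' : ℝ} (hg : GrowsAlong g x K)
    (h : K ≤ K') : GrowsAlong g x K' :=
  ⟨hg.1, hg.2.trans (mul_le_mul_of_nonneg_right h hg.1.le)⟩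

theorem GrowsAlong.nonneg {g : AffineFunctional V} {x : V} {K : ℝ} (hg : GrowsAlong g x K) :
    0 ≤ K :=
  nonneg_of_mul_nonneg_left ((by positivity : 0 ≤ ‖g‖ * ‖x‖).trans hg.2) hg.1

/-- Some nonnegative combination of the affine functionals `f j`, `j ∈ C`, grows along `x` with
constant `K`. -/
def ConeGrowsAlong (f : J → AffineFunctional V) (x : V) (C : Finset J) (K : ℝ) : Prop :=
  ∃ θ : J → ℝ, (∀ j, 0 ≤ θ j) ∧ GrowsAlong (∑ j ∈ C, θ j • f j) x K

theorem ConeGrowsAlong.mono {f : J → AffineFunctional V} {x : V} {C : Finset J} {K K' : ℝ}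
    (h : ConeGrowsAlong f x C K) (hK : K ≤ K') : ConeGrowsAlong f x C K' :=
  let ⟨θ, hθ, hg⟩ := h
  ⟨θ, hθ, hg.mono hK⟩

theorem ConeGrowsAlong.of_coe_sort {f : J → AffineFunctional V} {x : V} {C : Finset J} {K : ℝ}
    {θ : J → ℝ} (hθ : ∀ j, 0 ≤ θ j) {γ : C → ℝ} (hγ : ∀ j, 0 ≤ γ j) {j₀ : C} (hj₀ : γ j₀ = 0)
    (hg : GrowsAlong (∑ j, γ j • θ j • f j) x K) : ∃ C' ⊂ C, ConeGrowsAlong f x C' K := by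
  classical
  let γ' : J → ℝ := Function.extend Subtype.val γ 0
  have hγ' : ∀ j : C, γ' j = γ j := Subtype.val_injective.extend_apply γ 0
  have hsum : ∑ j ∈ C.erase j₀, (γ' j * θ j) • f j = ∑ j, γ j • θ j • f j := by
    rw [Finset.sum_erase _ (by rw [hγ', hj₀, zero_mul, zero_smul]), ← Finset.sum_coe_sort]
    simp only [hγ', mul_smul]
  refine ⟨C.erase j₀, Finset.erase_ssubset j₀.2, fun j => γ' j * θ j, fun j => ?_, hsum ▸ hg⟩
  refine mul_nonneg ?_ (hθ j)
  by_cases hj : j ∈ C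
  · exact (hγ' ⟨j, hj⟩).symm ▸ hγ _
  · exact (Function.extend_apply' γ (0 : J → ℝ) j fun ⟨a, ha⟩ => hj (ha ▸ a.2)).ge

variable [FiniteDimensional ℝ V] [Nontrivial V] [Fintype ι] [Fintype J] {X : ι → V} {k : ℕ}
  {f : J → AffineFunctional V}

theorem IsThinCover.sum_slack_le_one (hf : IsThinCover X k f) (hX : HasDeepProjections X k)
    (hGP : IsInGeneralPosition X) (hι : Module.finrank ℝ V + 1 ≤ Fintype.card ι) {κ : ℝ}
    (hκ : 0 ≤ κ) {C : Finset J} (hC : 2 ≤ #C) (hCd : #C ≤ Module.finrank ℝ V)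
    (hhoffman : ∀ T : C → Finset ι, IsHoffmanConstant X T κ)
    {x : V} {K : ℝ} (hPC : ConeGrowsAlong f x C K)
    (hmin : ∀ C' ⊂ C, ¬ ConeGrowsAlong f x C' (2 * (#C * κ) * K)) :
    ∑ j ∈ C, (k - 1 - #{i | 0 < f j (X i)}) ≤ 1 := by
  classical
  obtain ⟨θ, hθ, hg⟩ := hPC
  let T : C → Finset ι := fun j => {i | f j (X i) ≤ 0}
  have hT : ∀ j, #(T j)ᶜ = #{i | 0 < f j (X i)} := fun j => by simp [T, Finset.compl_filter]
  obtain ⟨z, hzT, hzsum, hz⟩ := hhoffman T (fun j => θ j • f j) fun j i hi =>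
    mul_nonpos_of_nonneg_of_nonpos (hθ j) (Finset.mem_filter.1 hi).2
  have hrel : ∀ β : C → ℝ, ∑ j, β j • z j = 0 → ∀ a b, β a = β b := fun β hβ a b => by
    by_contra hab
    rw [← Finset.sum_coe_sort] at hg
    obtain ⟨γ, hγ, ⟨j₀, hj₀⟩, hγg⟩ := hg.exists_sparser hκ hg.nonneg hzsum hz hβ hab
    obtain ⟨C', hC', hPC'⟩ := ConeGrowsAlong.of_coe_sort hθ hγ hj₀ hγg
    exact hmin C' hC' (by simpa using hPC')
  have : Nontrivial C := Fintype.one_lt_card_iff_nontrivial.1 (by rwa [Fintype.card_coe])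
  have hslack := hX.sum_slack_le_one hGP hι (by simpa using hCd)
    (fun j => (hT j).trans_lt (hf.card_pos_lt j)) hzT hzsum hrel
  rw [← Finset.sum_coe_sort]
  simpa only [hT] using hslack

theorem IsThinCover.exists_coneGrowsAlong (hf : IsThinCover X k f) (hX : HasDeepProjections X k)
    (hGP : IsInGeneralPosition X) (hι : Module.finrank ℝ V + 1 ≤ Fintype.card ι)
    (hJ : Fintype.card J = Module.finrank ℝ V + 1) {κ : ℝ} (hκ : 1 ≤ κ)
    (hhoffman : ∀ (C : Finset J) (T : C → Finset ι), IsHoffmanConstant X T κ) {R : ℝ}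
    (hR0 : 0 ≤ R) (hR : ∀ i, ‖X i‖ ≤ R) {x : V} (hx : R < ‖x‖) :
    ∃ C, ConeGrowsAlong f x C ((2 * (Fintype.card J * κ)) ^ Module.finrank ℝ V * (R + 1)) ∧
      (2 ≤ #C → ∑ j ∈ C, (k - 1 - #{i | 0 < f j (X i)}) ≤ 1) := by
  classical
  set μ := 2 * (Fintype.card J * κ)
  have hμ : 1 ≤ μ := by
    have : (1 : ℝ) ≤ Fintype.card J := by exact_mod_cast hJ ▸ Nat.le_add_left 1 _
    nlinarith
  obtain ⟨j₀, θ, hθ, hθj₀, hg⟩ := hf.exists_growsAlong hX hJ hR hx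
  have hcard : #(Finset.univ.erase j₀) = Module.finrank ℝ V := by
    rw [Finset.card_erase_of_mem (Finset.mem_univ _), Finset.card_univ, hJ, Nat.add_sub_cancel]
  have hstart : ConeGrowsAlong f x (Finset.univ.erase j₀) (R + 1) :=
    ⟨θ, hθ, by rwa [Finset.sum_erase _ (by rw [hθj₀, zero_smul])]⟩
  obtain ⟨C, hC, K, hK, hPC, hmin⟩ := exists_minimal_subset hμ (by positivity) hstart
  rw [hcard] at hK
  have hCd : #C ≤ Module.finrank ℝ V := hcard ▸ Finset.card_le_card hC
  refine ⟨C, hPC.mono hK, fun h2 => ?_⟩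
  refine hf.sum_slack_le_one hX hGP hι (zero_le_one.trans hκ) h2 hCd (hhoffman C) hPC ?_
  refine fun C' hC' h => hmin C' hC' (h.mono ?_)
  have hK0 : 0 ≤ K := hPC.choose_spec.2.nonneg
  have hCJ : #C ≤ Fintype.card J := Finset.card_le_univ C
  simp only [μ]
  gcongr

theorem HasDeepProjections.exists_separating_combination (hX : HasDeepProjections X k)
    (hGP : IsInGeneralPosition X) (hι : Module.finrank ℝ V + 1 ≤ Fintype.card ι)
    (hJ : Fintype.card J = Module.finrank ℝ V + 1) :
    ∃ R, ∀ {f : J → AffineFunctional V}, IsThinCover X k f → ∀ x, R < ‖x‖ →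
      ∃ (C : Finset J) (θ : J → ℝ), (∀ j, 0 ≤ θ j) ∧ 0 < (∑ j ∈ C, θ j • f j) x ∧
        (∀ i, (∑ j ∈ C, θ j • f j) (X i) < (∑ j ∈ C, θ j • f j) x) ∧
        (2 ≤ #C → ∑ j ∈ C, (k - 1 - #{i | 0 < f j (X i)}) ≤ 1) := by
  obtain ⟨κ, hκ, hhoffman⟩ := exists_uniform_isHoffmanConstant (J := J) X
  obtain ⟨M, hM⟩ := Finite.exists_le fun i => ‖X i‖
  set R := max M 0
  have hR : ∀ i, ‖X i‖ ≤ R := fun i => (hM i).trans (le_max_left _ _)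
  have hR0 : 0 ≤ R := le_max_right _ _
  refine ⟨max R ((2 * (Fintype.card J * κ)) ^ Module.finrank ℝ V * (R + 1) * (R + 1)),
    fun {f} hf x hx => ?_⟩
  obtain ⟨hxR, hxK⟩ := max_lt_iff.1 hx
  obtain ⟨C, ⟨θ, hθ, hg⟩, hslack⟩ := hf.exists_coneGrowsAlong hX hGP hι hJ hκ hhoffman hR0 hR hxR
  obtain ⟨hgx, hgX⟩ := hg.pos_and_lt hR0 hxK
  exact ⟨C, θ, hθ, hgx, fun i => hgX _ (hR i), hslack⟩

end SeparatingCombination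

section DeepRegion

variable {V ι : Type*} [NormedAddCommGroup V] [NormedSpace ℝ V] [Fintype ι]

theorem deepRegion_anti (X : ι → V) : Antitone (deepRegion X) :=
  fun _ _ hkm _ hx l => hkm.trans (hx l)

theorem le_card_of_mem_deepRegion {X : ι → V} {k : ℕ} {x : V} (hx : x ∈ deepRegion X k) :
    k ≤ Fintype.card ι :=
  (hx 0).trans (Finset.card_le_univ _)

/-- The number of sample points in the poorest closed halfspace around a deepest point: the maximum
depth before normalisation by the sample size. -/
def maxDepthCount (X : ι → V) : ℕ :=
  sSup {k | (deepRegion X k).Nonempty}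

theorem le_maxDepthCount_iff {X : ι → V} {k : ℕ} :
    k ≤ maxDepthCount X ↔ (deepRegion X k).Nonempty := by
  have hbdd : BddAbove {k | (deepRegion X k).Nonempty} :=
    ⟨Fintype.card ι, fun _ ⟨_, hx⟩ => le_card_of_mem_deepRegion hx⟩
  have hne : {k | (deepRegion X k).Nonempty}.Nonempty := ⟨0, 0, fun _ => Nat.zero_le _⟩
  exact ⟨fun hk => (Nat.sSup_mem hne hbdd).mono (deepRegion_anti X hk), le_csSup hbdd⟩

theorem deepRegion_maxDepthCount_add_one_eq_empty (X : ι → V) :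
    deepRegion X (maxDepthCount X + 1) = ∅ :=
  Set.not_nonempty_iff_eq_empty.1 fun h => (le_maxDepthCount_iff.2 h).not_gt (Nat.lt_succ_self _)

theorem one_le_maxDepthCount [Nonempty ι] (X : ι → V) : 1 ≤ maxDepthCount X :=
  let ⟨i⟩ := ‹Nonempty ι›
  le_maxDepthCount_iff.2 ⟨X i, fun _ => Finset.card_pos.2 ⟨i, by simp⟩⟩

/-- The set of deepest points. -/
def deepestRegion (X : ι → V) : Set V :=
  deepRegion X (maxDepthCount X)

theorem deepestRegion_nonempty (X : ι → V) : (deepestRegion X).Nonempty :=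
  le_maxDepthCount_iff.1 le_rfl

theorem convex_deepestRegion (X : ι → V) : Convex ℝ (deepestRegion X) :=
  convex_deepRegion X _

theorem isCompact_deepestRegion [Nonempty ι] (X : ι → V) : IsCompact (deepestRegion X) :=
  isCompact_deepRegion X (one_le_maxDepthCount X)

theorem exists_apply_le_of_mem_deepestRegion [Nonempty ι] {X : ι → V} {x : V}
    (hx : x ∈ deepestRegion X) (l : StrongDual ℝ V) : ∃ i, l x ≤ l (X i) :=
  let ⟨i, hi⟩ := Finset.card_pos.1 ((one_le_maxDepthCount X).trans (hx l))
  ⟨i, (Finset.mem_filter.1 hi).2⟩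

theorem AffineFunctional.halfspaceCount_contLinear (X : ι → V) (g : AffineFunctional V) (x : V) :
    halfspaceCount X g.contLinear x = #{i | g x ≤ g (X i)} := by
  simp only [halfspaceCount, g.apply_eq x, g.apply_eq (X _), add_le_add_iff_right]

end DeepRegion

section Contamination

theorem card_filter_sumElim {α ι κ : Type*} [Fintype ι] [Fintype κ] (X : ι → α) (Y : κ → α)
    (p : α → Prop) [DecidablePred p] :
    #{i | p (Sum.elim X Y i)} = #{i | p (X i)} + #{i | p (Y i)} := by
  simp only [Finset.card_filter, Fintype.sum_sum_type]
  rfl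

variable {V ι κ J : Type*} [NormedAddCommGroup V] [NormedSpace ℝ V] [Fintype ι] [Fintype κ]
  {X : ι → V} {Y : κ → V} {k h : ℕ} {f : J → AffineFunctional V} {x : V}

theorem halfspaceCount_sumElim (X : ι → V) (Y : κ → V) (l : StrongDual ℝ V) (x : V) :
    halfspaceCount (Sum.elim X Y) l x = halfspaceCount X l x + halfspaceCount Y l x :=
  card_filter_sumElim X Y (fun y => l x ≤ l y)

theorem IsThinCover.of_sumElim [Fintype J] (hf : IsThinCover (Sum.elim X Y) h f) (hk : h ≤ k) :
    IsThinCover X k f where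
  sum_eq_one := hf.sum_eq_one
  card_pos_lt j := by
    have := hf.card_pos_lt j
    rw [card_filter_sumElim X Y (fun y => 0 < f j y)] at this
    omega

theorem IsThinCover.apply_le_of_mem_deepRegion [Fintype J] (hf : IsThinCover X (h + 1) f)
    (hx : x ∈ deepRegion X h) {j : J} {i : ι} (hi : 0 < f j (X i)) : f j x ≤ f j (X i) := by
  rcases le_or_gt (f j x) 0 with h0 | h0
  · exact h0.trans hi.le
  have hsub : ({i | f j x ≤ f j (X i)} : Finset ι) ⊆ ({i | 0 < f j (X i)} : Finset ι) :=
    Finset.monotone_filter_right _ fun _ _ h => h0.trans_le h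
  have hle : #{i | 0 < f j (X i)} ≤ #{i | f j x ≤ f j (X i)} :=
    (Nat.lt_succ_iff.1 (hf.card_pos_lt j)).trans <|
      (hx (f j).contLinear).trans_eq ((f j).halfspaceCount_contLinear X x)
  have hmem : i ∈ ({i | f j x ≤ f j (X i)} : Finset ι) := by
    rw [Finset.eq_of_subset_of_card_le hsub hle]
    simpa using hi
  simpa using hmem

/-- At a deep point separated from `X`, the depth can only come from the contaminating points. -/
theorem le_sum_card_pos_of_separating (hx : x ∈ deepRegion (Sum.elim X Y) h) {C : Finset J}
    {θ : J → ℝ} (hθ : ∀ j, 0 ≤ θ j) (hgx : 0 < (∑ j ∈ C, θ j • f j) x)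
    (hgX : ∀ i, (∑ j ∈ C, θ j • f j) (X i) < (∑ j ∈ C, θ j • f j) x) :
    h ≤ ∑ j ∈ C, #{i | 0 < f j (Y i)} := by
  classical
  set g := ∑ j ∈ C, θ j • f j
  have hX0 : #{i | g x ≤ g (X i)} = 0 := by
    simpa [Finset.filter_eq_empty_iff] using hgX
  have hcount : h ≤ #{i | g x ≤ g (Y i)} := by
    have := hx g.contLinear
    rwa [halfspaceCount_sumElim, g.halfspaceCount_contLinear, g.halfspaceCount_contLinear, hX0,
      zero_add] at this
  refine hcount.trans ((Finset.card_le_card fun i hi => ?_).trans Finset.card_biUnion_le)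
  have hpos : 0 < ∑ j ∈ C, (θ j • f j) (Y i) := by
    rw [← AffineFunctional.sum_apply]
    exact hgx.trans_le (Finset.mem_filter.1 hi).2
  obtain ⟨j, hjC, hj⟩ := Finset.exists_lt_of_sum_lt (f := fun _ => (0 : ℝ)) (by simpa using hpos)
  refine Finset.mem_biUnion.2 ⟨j, hjC, Finset.mem_filter.2 ⟨Finset.mem_univ _, ?_⟩⟩
  exact pos_of_mul_pos_right hj (hθ j)

omit [Fintype ι] in
theorem two_le_card_of_separating {C : Finset J} {θ : J → ℝ} (hθ : ∀ j, 0 ≤ θ j)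
    (hgx : 0 < (∑ j ∈ C, θ j • f j) x)
    (hgX : ∀ i, (∑ j ∈ C, θ j • f j) (X i) < (∑ j ∈ C, θ j • f j) x)
    (hcover : ∀ j, ∃ i, f j x ≤ f j (X i)) : 2 ≤ #C := by
  by_contra! hC
  rcases Nat.le_one_iff_eq_zero_or_eq_one.1 (Nat.lt_succ_iff.1 hC) with hC | hC
  · simp [Finset.card_eq_zero.1 hC] at hgx
  · obtain ⟨j, rfl⟩ := Finset.card_eq_one.1 hC
    obtain ⟨i, hi⟩ := hcover j
    have := hgX i
    simp only [Finset.sum_singleton, ContinuousAffineMap.smul_apply, smul_eq_mul] at this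
    exact this.not_ge (mul_le_mul_of_nonneg_left hi (hθ j))

variable [FiniteDimensional ℝ V] [Nontrivial V]

theorem HasDeepProjections.exists_norm_le_of_lt (hX : HasDeepProjections X k)
    (hGP : IsInGeneralPosition X) (hι : Module.finrank ℝ V + 1 ≤ Fintype.card ι) :
    ∃ R, ∀ (Y : κ → V) (h : ℕ), 1 ≤ h → h < k →
      deepRegion (Sum.elim X Y) (h + 1) = ∅ →
      ∀ x ∈ deepRegion (Sum.elim X Y) h, ‖x‖ ≤ R := by
  have hJ : Fintype.card (Fin (Module.finrank ℝ V + 1)) = Module.finrank ℝ V + 1 :=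
    Fintype.card_fin _
  obtain ⟨R, hR⟩ := hX.exists_separating_combination hGP hι hJ
  refine ⟨R, fun Y h hh hhk hempty x hx => ?_⟩
  by_contra! hxR
  obtain ⟨f, hfZ⟩ := exists_isThinCover hempty
  have hf : IsThinCover X k f := hfZ.of_sumElim hhk
  obtain ⟨C, θ, hθ, hgx, hgX, hslack⟩ := hR hf x hxR
  have hcount := fun j => card_filter_sumElim X Y (fun y => 0 < f j y) ▸ hfZ.card_pos_lt j
  have hcover : ∀ j, ∃ i, f j x ≤ f j (X i) := fun j =>
    let ⟨i, hi⟩ := hf.exists_pos hX hJ j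
    ⟨i, hfZ.apply_le_of_mem_deepRegion hx (i := Sum.inl i) hi⟩
  have hC : 2 ≤ #C := two_le_card_of_separating hθ hgx hgX hcover
  have hXpos : ∀ j, 1 ≤ #{i | 0 < f j (X i)} := fun j =>
    let ⟨i, hi⟩ := hf.exists_pos hX hJ j
    Finset.card_pos.2 ⟨i, by simpa using hi⟩
  have hYle : h ≤ ∑ j ∈ C, #{i | 0 < f j (Y i)} := le_sum_card_pos_of_separating hx hθ hgx hgX
  have hle1 : h ≤ 1 := hYle.trans <| (Finset.sum_le_sum fun j _ => by
    have := hcount j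
    omega).trans (hslack hC)
  have hY0 : ∑ j ∈ C, #{i | 0 < f j (Y i)} = 0 := Finset.sum_eq_zero fun j _ => by
    have := hcount j
    have := hXpos j
    omega
  omega

end Contamination

section BoundedDepth

variable {V ι κ : Type*} [NormedAddCommGroup V] [NormedSpace ℝ V] [Fintype ι] [Fintype κ]
  {X : ι → V} {k : ℕ}

theorem HasDeepProjections.not_isThinCover {J : Type*} [Fintype J] (hX : HasDeepProjections X k)
    {p : AffineFunctional V} (hp : p.contLinear ≠ 0) (hpX : ∀ i, p (X i) = 0)
    (f : J → AffineFunctional V) : ¬ IsThinCover X k f := fun hf => by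
  obtain ⟨w, hw⟩ := DFunLike.ne_iff.1 hp
  have hw0 : w ≠ 0 := fun h => hw (by simp [h])
  -- Subtracting multiples of `p` makes `f` constant along `w` without changing its values on `X`.
  let f' : J → AffineFunctional V := fun j => f j - ((f j).contLinear w / p.contLinear w) • p
  have hf'X : ∀ j i, f' j (X i) = f j (X i) := fun j i => by simp [f', hpX]
  have hf'w : ∀ j, (f' j).contLinear w = 0 := fun j => by
    have : (f' j).contLinear w =
        (f j).contLinear w - (f j).contLinear w / p.contLinear w * p.contLinear w := rfl
    rw [this, div_mul_cancel₀ _ hw, sub_self]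
  have hsum : ∀ y, ∑ j, f' j y = 1 := fun y => by
    simp only [f', ContinuousAffineMap.sub_apply, ContinuousAffineMap.smul_apply, smul_eq_mul,
      Finset.sum_sub_distrib, hf.sum_eq_one, ← Finset.sum_mul, ← Finset.sum_div,
      AffineFunctional.sum_contLinear_eq_zero hf.sum_eq_one, zero_div, zero_mul, sub_zero]
  obtain ⟨j, hj⟩ := hX.exists_le_card_pos hsum hw0 hf'w
  simp only [hf'X] at hj
  exact hj.not_gt (hf.card_pos_lt j)

theorem exists_halfspaceCount_eq_zero {R : ℝ} (hR : ∀ i, ‖X i‖ ≤ R) {x : V} (hx : R < ‖x‖) :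
    ∃ l, halfspaceCount X l x = 0 := by
  obtain ⟨l, hl, hlx⟩ := exists_dual_vector'' ℝ x
  refine ⟨l, Finset.card_eq_zero.2 (Finset.filter_eq_empty_iff.2 fun i _ => ?_)⟩
  have hli : l (X i) ≤ ‖X i‖ :=
    (le_abs_self _).trans (l.le_of_opNorm_le hl _ |>.trans_eq (one_mul _))
  have : l x = ‖x‖ := hlx
  linarith [hR i]

theorem le_card_of_mem_deepRegion_sumElim {R : ℝ} (hR : ∀ i, ‖X i‖ ≤ R) {Y : κ → V} {x : V} {h : ℕ}
    (hx : x ∈ deepRegion (Sum.elim X Y) h) (hxR : R < ‖x‖) : h ≤ Fintype.card κ := by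
  obtain ⟨l, hl⟩ := exists_halfspaceCount_eq_zero hR hxR
  have := hx l
  rw [halfspaceCount_sumElim, hl, zero_add] at this
  exact this.trans (Finset.card_le_univ _)

variable [FiniteDimensional ℝ V]

theorem exists_contLinear_ne_zero_forall_apply_eq_zero [Nonempty ι]
    (hι : Fintype.card ι ≤ Module.finrank ℝ V) (X : ι → V) :
    ∃ p : AffineFunctional V, p.contLinear ≠ 0 ∧ ∀ i, p (X i) = 0 := by
  have hker : LinearMap.ker (LinearMap.pi fun i => AffineFunctional.eval (X i)) ≠ ⊥ :=
    LinearMap.ker_ne_bot_of_finrank_lt <| by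
      rw [AffineFunctional.finrank_eq, Module.finrank_fintype_fun_eq_card]
      omega
  obtain ⟨p, hp, hp0⟩ := Submodule.exists_mem_ne_zero_of_ne_bot hker
  have hpX : ∀ i, p (X i) = 0 := fun i => congrFun (LinearMap.mem_ker.1 hp) i
  refine ⟨p, fun hlin => hp0 (ContinuousAffineMap.ext fun y => ?_), hpX⟩
  obtain ⟨i⟩ := ‹Nonempty ι›
  have hi := hpX i
  rw [p.apply_eq, hlin] at hi ⊢
  exact hi

theorem HasDeepProjections.exists_norm_le [Nontrivial V] [Nonempty ι]
    (hX : HasDeepProjections X k) (hGP : IsInGeneralPosition X) (hκ : Fintype.card κ < k) :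
    ∃ R, ∀ Y : κ → V, ∀ x ∈ deepestRegion (Sum.elim X Y), ‖x‖ ≤ R := by
  obtain ⟨M, hM⟩ := Finite.exists_le fun i => ‖X i‖
  obtain ⟨R, hR⟩ : ∃ R, ∀ Y : κ → V, maxDepthCount (Sum.elim X Y) < k →
      ∀ x ∈ deepestRegion (Sum.elim X Y), ‖x‖ ≤ R := by
    rcases le_or_gt (Fintype.card ι) (Module.finrank ℝ V) with hι | hι
    · obtain ⟨p, hp, hpX⟩ := exists_contLinear_ne_zero_forall_apply_eq_zero hι X
      refine ⟨0, fun Y hY => ?_⟩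
      obtain ⟨f, hf⟩ :=
        exists_isThinCover (deepRegion_maxDepthCount_add_one_eq_empty (Sum.elim X Y))
      exact (hX.not_isThinCover hp hpX f (hf.of_sumElim hY)).elim
    · obtain ⟨R, hR⟩ := hX.exists_norm_le_of_lt (κ := κ) hGP hι
      exact ⟨R, fun Y hY => hR Y _ (one_le_maxDepthCount _) hY
        (deepRegion_maxDepthCount_add_one_eq_empty _)⟩
  refine ⟨max R M, fun Y x hx => ?_⟩
  by_contra! hxR
  obtain ⟨hxR, hxM⟩ := max_lt_iff.1 hxR
  exact hxR.not_ge (hR Y ((le_card_of_mem_deepRegion_sumElim hM hx hxM).trans_lt hκ) x hx)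

end BoundedDepth

section Clumping

variable {V W ι κ J : Type*} [NormedAddCommGroup V] [NormedSpace ℝ V] [NormedAddCommGroup W]
  [NormedSpace ℝ W] [Fintype ι] [Fintype κ] {X : ι → V} {π : V →L[ℝ] W} {ℓ : StrongDual ℝ V} {u : V}
  {k : ℕ}

/-- The pullback of `f` along `π`, tilted so as to vanish at the point `r • u` when `π u = 0` and
`ℓ u = 1`. -/
def tilt (π : V →L[ℝ] W) (ℓ : StrongDual ℝ V) (f : AffineFunctional W) (r : ℝ) :
    AffineFunctional V :=
  f.comp π.toContinuousAffineMap - (f 0 / r) • ℓ.toContinuousAffineMap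

theorem tilt_apply (π : V →L[ℝ] W) (ℓ : StrongDual ℝ V) (f : AffineFunctional W) (r : ℝ) (y : V) :
    tilt π ℓ f r y = f (π y) - f 0 / r * ℓ y := rfl

theorem tilt_smul_eq_zero (hπ : π u = 0) (hℓ : ℓ u = 1) (f : AffineFunctional W) {r : ℝ}
    (hr : r ≠ 0) : tilt π ℓ f r (r • u) = 0 := by
  rw [tilt_apply, π.map_smul, ℓ.map_smul, hπ, hℓ, smul_zero, smul_eq_mul, mul_one,
    div_mul_cancel₀ _ hr, sub_self]

theorem sum_tilt [Fintype J] {f : J → AffineFunctional W} {c : ℝ} (hf : ∀ y, ∑ j, f j y = c)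
    (r : ℝ) (y : V) : ∑ j, tilt π ℓ (f j) r y = c - c / r * ℓ y := by
  simp only [tilt_apply, Finset.sum_sub_distrib, hf, ← Finset.sum_mul, ← Finset.sum_div]

theorem tendsto_tilt (π : V →L[ℝ] W) (ℓ : StrongDual ℝ V) (f : AffineFunctional W) (y : V) :
    Filter.Tendsto (fun r => tilt π ℓ f r y) Filter.atTop (nhds (f (π y))) := by
  simpa [tilt_apply] using
    ((tendsto_const_nhds.div_atTop Filter.tendsto_id).mul_const (ℓ y)).const_sub (f (π y))

theorem IsThinCover.exists_card_nonneg_lt [Fintype J] {Z : ι → W} {f : J → AffineFunctional W}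
    (hf : IsThinCover Z k f) :
    ∃ c > 0, ∃ g : J → AffineFunctional W, (∀ y, ∑ j, g j y = c) ∧
      ∀ j, #{i | 0 ≤ g j (Z i)} < k := by
  have hJ : (0 : ℝ) < Fintype.card J := by
    rw [Nat.cast_pos, Fintype.card_pos_iff]
    by_contra hJ
    rw [not_nonempty_iff] at hJ
    simpa using hf.sum_eq_one 0
  let δ : ℝ := 1 / (2 * Fintype.card J)
  have hδ : 0 < δ := by positivity
  refine ⟨1 / 2, by norm_num, fun j => f j - ContinuousAffineMap.const ℝ W δ, fun y => ?_,
    fun j => (Finset.card_le_card fun i hi => ?_).trans_lt (hf.card_pos_lt j)⟩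
  · simp only [ContinuousAffineMap.sub_apply, ContinuousAffineMap.coe_const, Function.const_apply,
      Finset.sum_sub_distrib, hf.sum_eq_one, Finset.sum_const, Finset.card_univ, nsmul_eq_mul, δ]
    field_simp
    norm_num
  · have hi : δ ≤ f j (Z i) := sub_nonneg.1 (Finset.mem_filter.1 hi).2
    exact Finset.mem_filter.2 ⟨Finset.mem_univ _, hδ.trans_le hi⟩

variable [FiniteDimensional ℝ W]

theorem eventually_deepRegion_sumElim_eq_empty (hπ : π u = 0) (hℓ : ℓ u = 1)
    (hX : deepRegion (π ∘ X) k = ∅) (hκ : Fintype.card κ < k) :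
    ∀ᶠ r : ℝ in Filter.atTop, deepRegion (Sum.elim X fun _ : κ => r • u) k = ∅ := by
  obtain ⟨f, hf⟩ := exists_isThinCover hX
  obtain ⟨c, hc, g, hsum, hcard⟩ := hf.exists_card_nonneg_lt
  have hneg : ∀ᶠ r in Filter.atTop, ∀ j i, g j (π (X i)) < 0 → tilt π ℓ (g j) r (X i) < 0 := by
    refine Filter.eventually_all.2 fun j => Filter.eventually_all.2 fun i => ?_
    refine Filter.eventually_imp_distrib_left.2 fun h => ?_
    exact (tendsto_tilt π ℓ (g j) (X i)).eventually_lt_const h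
  have hlarge : ∀ᶠ r in Filter.atTop, ∀ i, ℓ (X i) < r :=
    Filter.eventually_all.2 fun i => Filter.eventually_gt_atTop _
  filter_upwards [hneg, hlarge, Filter.eventually_gt_atTop 0] with r hneg hlarge hr
  refine Set.eq_empty_of_forall_notMem fun p hp => ?_
  rcases le_or_gt r (ℓ p) with hrp | hrp
  · have hX0 : halfspaceCount X ℓ p = 0 := Finset.card_eq_zero.2 <|
      Finset.filter_eq_empty_iff.2 fun i _ => ((hlarge i).trans_le hrp).not_ge
    have := hp ℓ
    rw [halfspaceCount_sumElim, hX0, zero_add] at this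
    exact (this.trans (Finset.card_le_univ _)).not_gt hκ
  · have hpos : 0 < ∑ j, tilt π ℓ (g j) r p := by
      rw [sum_tilt hsum, div_mul_eq_mul_div, sub_pos, div_lt_iff₀ hr]
      exact mul_lt_mul_of_pos_left hrp hc
    obtain ⟨j, -, hj⟩ := Finset.exists_lt_of_sum_lt (f := fun _ => (0 : ℝ)) (by simpa using hpos)
    have hY0 : #{_i : κ | tilt π ℓ (g j) r p ≤ tilt π ℓ (g j) r (r • u)} = 0 := by
      simp [tilt_smul_eq_zero hπ hℓ _ hr.ne', hj]
    have hle := hp (tilt π ℓ (g j) r).contLinear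
    rw [halfspaceCount_sumElim, AffineFunctional.halfspaceCount_contLinear,
      AffineFunctional.halfspaceCount_contLinear, hY0, add_zero] at hle
    refine (hle.trans (Finset.card_le_card fun i hi => ?_)).not_gt (hcard j)
    simp only [Finset.mem_filter, Finset.mem_univ, true_and, Function.comp_apply] at hi ⊢
    by_contra! h
    exact (hneg j i h).not_ge (hj.le.trans hi)

theorem eventually_smul_mem_deepestRegion (hπ : π u = 0) (hℓ : ℓ u = 1)
    (hX : deepRegion (π ∘ X) (Fintype.card κ + 1) = ∅) :
    ∀ᶠ r : ℝ in Filter.atTop, r • u ∈ deepestRegion (Sum.elim X fun _ : κ => r • u) := by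
  filter_upwards [eventually_deepRegion_sumElim_eq_empty hπ hℓ hX (Nat.lt_succ_self _)] with r hr
  have hmax : maxDepthCount (Sum.elim X fun _ : κ => r • u) ≤ Fintype.card κ := by
    rw [← Nat.lt_succ_iff, ← not_le, le_maxDepthCount_iff, Set.not_nonempty_iff_eq_empty]
    exact hr
  refine fun l => hmax.trans ?_
  rw [halfspaceCount_sumElim]
  simp [halfspaceCount]

end Clumping

section Barycenter

variable {V : Type*} [NormedAddCommGroup V] [NormedSpace ℝ V] {M : Set V}

/-- The affine dimension of a set, which selects the Hausdorff measure defining its barycenter. -/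
abbrev affineDim (M : Set V) : ℕ :=
  Module.finrank ℝ (affineSpan ℝ M).direction

theorem exists_isometry_direction_image_eq [FiniteDimensional ℝ V] (hM : Convex ℝ M)
    (hne : M.Nonempty) :
    ∃ (φ : (affineSpan ℝ M).direction → V) (N : Set (affineSpan ℝ M).direction),
      Isometry φ ∧ φ '' N = M ∧ (interior N).Nonempty := by
  have : Nonempty (affineSpan ℝ M) := (hne.mono (subset_affineSpan ℝ M)).to_subtype
  obtain ⟨_, p, hp, -⟩ := hne.intrinsicInterior hM
  let e := AffineIsometryEquiv.vaddConst ℝ p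
  have he : e 0 = p := zero_vadd (affineSpan ℝ M).direction p
  refine ⟨Subtype.val ∘ e, Subtype.val ∘ e ⁻¹' M, isometry_subtype_coe.comp e.isometry, ?_, 0, ?_⟩
  · refine Set.image_preimage_eq_of_subset fun y hy => ?_
    exact ⟨e.symm ⟨y, subset_affineSpan ℝ M hy⟩, congrArg Subtype.val (e.apply_symm_apply _)⟩
  · rw [Set.preimage_comp]
    refine preimage_interior_subset_interior_preimage e.continuous (Set.mem_preimage.2 ?_)
    rwa [he]

theorem half_homothety_image_subset (hM : Convex ℝ M) {x : V} (hx : x ∈ M) :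
    AffineMap.homothety x (1 / 2 : ℝ) '' M ⊆ M := by
  rintro _ ⟨y, hy, rfl⟩
  exact hM.lineMap_mem hx hy (t := 1 / 2) ⟨by norm_num, by norm_num⟩

theorem half_le_apply_half_homothety {g : V → ℝ} (hg : ConcaveOn ℝ M g) (hg0 : ∀ y ∈ M, 0 ≤ g y)
    {x y : V} (hx : x ∈ M) (hy : y ∈ M) :
    1 / 2 * g x ≤ g (AffineMap.homothety x (1 / 2 : ℝ) y) := by
  have hhalf : (0 : ℝ) ≤ 1 / 2 := by norm_num
  have hconc : 1 / 2 * g x + 1 / 2 * g y ≤ g ((1 / 2 : ℝ) • x + (1 / 2 : ℝ) • y) :=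
    hg.2 hx hy hhalf hhalf (by norm_num)
  have hpoint : AffineMap.homothety x (1 / 2 : ℝ) y = (1 / 2 : ℝ) • x + (1 / 2 : ℝ) • y := by
    rw [AffineMap.homothety_eq_lineMap, AffineMap.lineMap_apply_module]
    norm_num
  rw [hpoint]
  linarith [hg0 y hy]

variable [MeasurableSpace V] [BorelSpace V]

theorem hausdorffMeasure_affineDim_pos [FiniteDimensional ℝ V] (hM : Convex ℝ M)
    (hne : M.Nonempty) : 0 < μH[affineDim M] M := by
  obtain ⟨φ, N, hφ, hN, hint⟩ := exists_isometry_direction_image_eq hM hne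
  rw [← congrArg μH[affineDim M] hN, hφ.hausdorffMeasure_image (Or.inl (Nat.cast_nonneg _))]
  exact (isOpen_interior.measure_pos _ hint).trans_le (measure_mono interior_subset)

theorem hausdorffMeasure_affineDim_lt_top [FiniteDimensional ℝ V] (hM : Convex ℝ M)
    (hne : M.Nonempty) (hc : IsCompact M) : μH[affineDim M] M < ⊤ := by
  obtain ⟨φ, N, hφ, hN, -⟩ := exists_isometry_direction_image_eq hM hne
  have hNc : IsCompact N := by
    rw [← hφ.injective.preimage_image N, hN]
    exact hφ.isClosedEmbedding.isCompact_preimage hc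
  rw [← congrArg μH[affineDim M] hN, hφ.hausdorffMeasure_image (Or.inl (Nat.cast_nonneg _))]
  exact hNc.measure_lt_top

/-- The half-sized copy of `M` at `x` carries a fixed fraction of the measure, and `g ≥ g x / 2` on
it. -/
theorem half_pow_mul_le_setIntegral {D : ℕ} {g : V → ℝ} {x : V} (hc : IsCompact M)
    (hfin : μH[D] M ≠ ⊤) (hg : ConcaveOn ℝ M g) (hg0 : ∀ y ∈ M, 0 ≤ g y)
    (hgi : IntegrableOn g M μH[D]) (hx : x ∈ M) :
    (1 / 2) ^ (D + 1) * g x * μH[D].real M ≤ ∫ y in M, g y ∂μH[D] := by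
  set M' := AffineMap.homothety x (1 / 2 : ℝ) '' M
  have hsub : M' ⊆ M := half_homothety_image_subset hg.1 hx
  have hmeas : MeasurableSet M' :=
    (hc.image (AffineMap.homothety_continuous x (1 / 2 : ℝ))).isClosed.measurableSet
  have hμ : μH[D].real M' = (1 / 2) ^ D * μH[D].real M := by
    rw [measureReal_def, hausdorffMeasure_homothety_image (Nat.cast_nonneg _) x (by norm_num)]
    simp [measureReal_def, ENNReal.toReal_mul, ENNReal.smul_def]
  calc (1 / 2) ^ (D + 1) * g x * μH[D].real M
      = 1 / 2 * g x * μH[D].real M' := by rw [hμ]; ring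
    _ ≤ ∫ y in M', g y ∂μH[D] := by
        refine setIntegral_ge_of_const_le_real hmeas (measure_ne_top_of_subset hsub hfin) ?_
          (hgi.mono_set hsub)
        rintro _ ⟨y, hy, rfl⟩
        exact half_le_apply_half_homothety hg hg0 hx hy
    _ ≤ ∫ y in M, g y ∂μH[D] :=
        setIntegral_mono_set hgi (ae_restrict_of_forall_mem hc.isClosed.measurableSet hg0)
          hsub.eventuallyLE

theorem half_pow_mul_le_setAverage [FiniteDimensional ℝ V] {g : V → ℝ} {x : V}
    (hc : IsCompact M) (hg : ConcaveOn ℝ M g) (hgc : ContinuousOn g M) (hg0 : ∀ y ∈ M, 0 ≤ g y)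
    (hx : x ∈ M) :
    (1 / 2) ^ (affineDim M + 1) * g x ≤ g (⨍ y in M, y ∂μH[affineDim M]) := by
  have hpos := hausdorffMeasure_affineDim_pos hg.1 ⟨x, hx⟩
  have hfin := (hausdorffMeasure_affineDim_lt_top hg.1 ⟨x, hx⟩ hc).ne
  have hMm := hc.isClosed.measurableSet
  have hgi : IntegrableOn g M μH[affineDim M] :=
    hgc.integrableOn_of_subset_isCompact hc hMm subset_rfl hfin
  have hid : IntegrableOn (fun y => y) M μH[affineDim M] :=
    continuousOn_id.integrableOn_of_subset_isCompact hc hMm subset_rfl hfin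
  calc (1 / 2) ^ (affineDim M + 1) * g x
      ≤ ⨍ y in M, g y ∂μH[affineDim M] := by
        have hreal : 0 < μH[affineDim M].real M := ENNReal.toReal_pos hpos.ne' hfin
        rw [MeasureTheory.setAverage_eq, smul_eq_mul, le_inv_mul_iff₀ hreal, mul_comm]
        exact half_pow_mul_le_setIntegral hc hfin hg hg0 hgi hx
    _ ≤ g (⨍ y in M, y ∂μH[affineDim M]) :=
        hg.le_map_set_average hgc hc.isClosed hpos.ne' hfin
          (ae_restrict_of_forall_mem hMm fun _ hy => hy) hid hgi

theorem average_mem_of_convex_of_isCompact [FiniteDimensional ℝ V] (hM : Convex ℝ M)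
    (hne : M.Nonempty) (hc : IsCompact M) : ⨍ y in M, y ∂μH[affineDim M] ∈ M := by
  have hfin := (hausdorffMeasure_affineDim_lt_top hM hne hc).ne
  have hMm := hc.isClosed.measurableSet
  exact hM.set_average_mem hc.isClosed (hausdorffMeasure_affineDim_pos hM hne).ne' hfin
    (ae_restrict_of_forall_mem hMm fun _ hy => hy)
    (continuousOn_id.integrableOn_of_subset_isCompact hc hMm subset_rfl hfin)

theorem setAverage_eq_average {d : ℕ} (M : Set (E d)) :
    setAverage M = ⨍ y in M, y ∂μH[affineDim M] :=
  (MeasureTheory.setAverage_eq _ _ _).symm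

end Barycenter

section HalfspaceMedian

variable {V W ι κ : Type*} [NormedAddCommGroup V] [NormedSpace ℝ V]
  [MeasurableSpace V] [BorelSpace V] [NormedAddCommGroup W] [NormedSpace ℝ W]
  [FiniteDimensional ℝ W] [Fintype ι] [Fintype κ] {X : ι → V}

/-- The barycenter of the set of deepest points. -/
def halfspaceMedian (X : ι → V) : V :=
  ⨍ y in deepestRegion X, y ∂μH[affineDim (deepestRegion X)]

variable [FiniteDimensional ℝ V]

theorem halfspaceMedian_mem_deepestRegion [Nonempty ι] (X : ι → V) :
    halfspaceMedian X ∈ deepestRegion X :=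
  average_mem_of_convex_of_isCompact (convex_deepestRegion X) (deepestRegion_nonempty X)
    (isCompact_deepestRegion X)

theorem half_pow_mul_add_le_halfspaceMedian [Nonempty ι] {l : StrongDual ℝ V} {R : ℝ} {x : V}
    (hR : ∀ i, -R ≤ l (X i)) (hx : x ∈ deepestRegion X) :
    (1 / 2) ^ (Module.finrank ℝ V + 1) * (l x + R) ≤ l (halfspaceMedian X) + R := by
  have hnonneg : ∀ y ∈ deepestRegion X, 0 ≤ l y + R := fun y hy => by
    obtain ⟨i, hi⟩ := exists_apply_le_of_mem_deepestRegion hy (-l)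
    rw [neg_apply, neg_apply] at hi
    linarith [hR i]
  calc (1 / 2) ^ (Module.finrank ℝ V + 1) * (l x + R)
      ≤ (1 / 2) ^ (affineDim (deepestRegion X) + 1) * (l x + R) := by
        refine mul_le_mul_of_nonneg_right ?_ (hnonneg x hx)
        refine pow_le_pow_of_le_one (by norm_num) (by norm_num) ?_
        exact Nat.succ_le_succ (Submodule.finrank_le _)
    _ ≤ l (halfspaceMedian X) + R :=
        half_pow_mul_le_setAverage (g := fun y => l y + R) (isCompact_deepestRegion X)
          ((l.toLinearMap.concaveOn (convex_deepestRegion X)).add_const R)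
          (l.continuous.add continuous_const).continuousOn hnonneg hx

theorem tendsto_apply_halfspaceMedian_sumElim_atTop [Nonempty κ] {π : V →L[ℝ] W}
    {ℓ : StrongDual ℝ V} {u : V} (hπ : π u = 0) (hℓ : ℓ u = 1)
    (hX : deepRegion (π ∘ X) (Fintype.card κ + 1) = ∅) :
    Filter.Tendsto (fun r : ℝ => ℓ (halfspaceMedian (Sum.elim X fun _ : κ => r • u)))
      Filter.atTop Filter.atTop := by
  obtain ⟨R, hR⟩ := Finite.exists_le fun i => -ℓ (X i)
  have hlin : Filter.Tendsto
      (fun r : ℝ => (1 / 2) ^ (Module.finrank ℝ V + 1) * (r + max R 0) - max R 0)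
      Filter.atTop Filter.atTop := by
    refine Filter.tendsto_atTop_add_const_right _ _ <|
      Filter.Tendsto.const_mul_atTop (by positivity) ?_
    exact Filter.tendsto_atTop_add_const_right _ _ Filter.tendsto_id
  refine Filter.tendsto_atTop_mono' _ ?_ hlin
  filter_upwards [eventually_smul_mem_deepestRegion hπ hℓ hX, Filter.eventually_ge_atTop 0]
    with r hr hr0
  have hlow : ∀ i, -max R 0 ≤ ℓ (Sum.elim X (fun _ : κ => r • u) i) := by
    rintro (i | i)
    · exact neg_le.1 ((hR i).trans (le_max_left _ _))
    · rw [Sum.elim_inr, map_smul, hℓ, smul_eq_mul, mul_one]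
      exact (neg_nonpos.2 (le_max_right _ _)).trans hr0
  have := half_pow_mul_add_le_halfspaceMedian hlow hr
  rw [map_smul, hℓ, smul_eq_mul, mul_one] at this
  linarith

end HalfspaceMedian

section Reindexing

variable {V ι κ : Type*} [NormedAddCommGroup V] [NormedSpace ℝ V] [Fintype ι] [Fintype κ]

theorem halfspaceCount_comp_equiv (X : κ → V) (e : ι ≃ κ) :
    halfspaceCount (X ∘ e) = halfspaceCount X := by
  ext l x
  exact Finset.card_equiv e (by simp)

theorem deepestRegion_comp_equiv (X : κ → V) (e : ι ≃ κ) :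
    deepestRegion (X ∘ e) = deepestRegion X := by
  simp only [deepestRegion, maxDepthCount, deepRegion, halfspaceCount_comp_equiv]

end Reindexing

section TukeyDepth

variable {d n : ℕ} {X : Fin n → E d} {x : E d} {k : ℕ}

theorem sideCount_eq_halfspaceCount (X : Fin n → E d) (u x : E d) :
    sideCount X u x = halfspaceCount X (-innerSL ℝ u) x := by
  simp [sideCount, halfspaceCount, ← Set.ncard_coe_finset]

theorem halfspaceCount_zero (X : Fin n → E d) (x : E d) : halfspaceCount X 0 x = n := by
  simp [halfspaceCount]

theorem halfspaceCount_smul {c : ℝ} (hc : 0 < c) (X : Fin n → E d) (l : StrongDual ℝ (E d))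
    (x : E d) : halfspaceCount X (c • l) x = halfspaceCount X l x := by
  simp only [halfspaceCount, smul_apply, smul_eq_mul, mul_le_mul_iff_of_pos_left hc]

theorem exists_norm_eq_one (hd : d ≠ 0) : ∃ u : E d, ‖u‖ = 1 :=
  have : NeZero d := ⟨hd⟩
  exists_norm_eq _ zero_le_one

theorem mem_deepRegion_iff_le_sideCount (hd : d ≠ 0) :
    x ∈ deepRegion X k ↔ ∀ u : E d, ‖u‖ = 1 → k ≤ sideCount X u x := by
  refine ⟨fun hx u _ => (hx _).trans_eq (sideCount_eq_halfspaceCount X u x).symm, fun hx l => ?_⟩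
  rcases eq_or_ne l 0 with rfl | hl
  · obtain ⟨u, hu⟩ := exists_norm_eq_one hd
    calc k ≤ sideCount X u x := hx u hu
      _ ≤ Fintype.card (Fin n) := by
        rw [sideCount_eq_halfspaceCount]
        exact Finset.card_le_univ _
      _ = halfspaceCount X 0 x := by rw [halfspaceCount_zero, Fintype.card_fin]
  · let w := (InnerProductSpace.toDual ℝ (E d)).symm (-l)
    have hw : w ≠ 0 := by simpa [w] using hl
    have hwl : -innerSL ℝ (‖w‖⁻¹ • w) = ‖w‖⁻¹ • l := by
      ext y
      simp [w]
    have := hx (‖w‖⁻¹ • w) (norm_smul_inv_norm hw)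
    rwa [sideCount_eq_halfspaceCount, hwl, halfspaceCount_smul (by positivity)] at this

theorem exists_depth_eq_div (hd : d ≠ 0) (X : Fin n → E d) (x : E d) :
    ∃ c : ℕ, depth X x = c / n ∧ ∀ k, x ∈ deepRegion X k ↔ k ≤ c := by
  obtain ⟨u, hu, hmin⟩ := exists_minimalFor_of_wellFoundedLT (fun u : E d => ‖u‖ = 1)
    (sideCount X · x) (exists_norm_eq_one hd)
  have hle : ∀ v : E d, ‖v‖ = 1 → sideCount X u x ≤ sideCount X v x := fun v hv =>
    (le_total _ _).elim id (hmin hv)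
  refine ⟨sideCount X u x, IsLeast.csInf_eq ⟨⟨u, hu, rfl⟩, ?_⟩, fun k => ?_⟩
  · rintro _ ⟨v, hv, rfl⟩
    gcongr
    exact hle v hv
  · rw [mem_deepRegion_iff_le_sideCount hd]
    exact ⟨fun h => h u hu, fun h v hv => h.trans (hle v hv)⟩

theorem maxDepth_eq_div (hd : d ≠ 0) (X : Fin n → E d) : maxDepth X = maxDepthCount X / n := by
  refine IsGreatest.csSup_eq ⟨?_, ?_⟩
  · obtain ⟨x, hx⟩ := deepestRegion_nonempty X
    obtain ⟨c, hdepth, hc⟩ := exists_depth_eq_div hd X x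
    have hcx : maxDepthCount X = c :=
      le_antisymm ((hc _).1 hx) (le_maxDepthCount_iff.2 ⟨x, (hc c).2 le_rfl⟩)
    exact ⟨x, by rw [hdepth, hcx]⟩
  · rintro _ ⟨x, rfl⟩
    obtain ⟨c, hdepth, hc⟩ := exists_depth_eq_div hd X x
    rw [hdepth]
    gcongr
    exact le_maxDepthCount_iff.2 ⟨x, (hc c).2 le_rfl⟩

theorem MSet_eq_deepestRegion (hd : d ≠ 0) (hn : n ≠ 0) (X : Fin n → E d) :
    MSet X = deepestRegion X := by
  ext x
  obtain ⟨c, hdepth, hc⟩ := exists_depth_eq_div hd X x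
  have hcmax : c ≤ maxDepthCount X := le_maxDepthCount_iff.2 ⟨x, (hc c).2 le_rfl⟩
  have hn' : (n : ℝ) ≠ 0 := Nat.cast_ne_zero.2 hn
  rw [MSet, Set.mem_ofPred_eq, maxDepth_eq_div hd, hdepth, div_left_inj' hn', Nat.cast_inj,
    deepestRegion, hc]
  exact hcmax.ge_iff_eq.symm

theorem TukeyMedian_eq_halfspaceMedian (hd : d ≠ 0) (hn : n ≠ 0) (X : Fin n → E d) :
    TukeyMedian X = halfspaceMedian X := by
  rw [TukeyMedian, MSet_eq_deepestRegion hd hn, setAverage_eq_average, halfspaceMedian]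

theorem TukeyMedian_append {m : ℕ} (hd : d ≠ 0) (hn : n ≠ 0) (X : Fin n → E d) (Y : Fin m → E d) :
    TukeyMedian (Fin.append X Y) = halfspaceMedian (Sum.elim X Y) := by
  have happend : Fin.append X Y ∘ finSumFinEquiv = Sum.elim X Y := by
    ext i : 1
    cases i <;> simp
  rw [TukeyMedian_eq_halfspaceMedian hd (by omega), halfspaceMedian, halfspaceMedian, ← happend,
    deepestRegion_comp_equiv]

theorem inGeneralPosition.isInGeneralPosition (hX : inGeneralPosition X) :
    IsInGeneralPosition X := fun f hf => by
  rw [finrank_euclideanSpace_fin]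
  rcases eq_or_ne f.contLinear 0 with h0 | h0
  · have hconst : ∀ y, f y = f 0 := fun y => by simp [f.apply_eq y, h0]
    have hf0 : f 0 ≠ 0 := fun h => hf (ContinuousAffineMap.ext fun y => (hconst y).trans h)
    simp [hconst, hf0]
  · let v := (InnerProductSpace.toDual ℝ (E d)).symm f.contLinear
    have hv : ∀ y, f y = 0 ↔ ⟪v, y⟫ = -f 0 := fun y => by
      rw [InnerProductSpace.toDual_symm_apply, f.apply_eq, add_eq_zero_iff_eq_neg]
    have := hX v (by simpa [v] using h0) (-f 0)
    simpa only [hv, ← Set.ncard_coe_finset, Finset.coe_filter_univ] using this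

end TukeyDepth

section Projections

variable {d n : ℕ} {X : Fin n → E d} {u : E d} {A : Fin (d - 1) → E d}

theorem isLinearMap_proj (A : Fin (d - 1) → E d) : IsLinearMap ℝ (proj A) where
  map_add x y := by ext j; simp [proj, inner_add_right]
  map_smul c x := by ext j; simp [proj, inner_smul_right]

theorem isLinearMap_embed (A : Fin (d - 1) → E d) : IsLinearMap ℝ (embed A) where
  map_add x y := by simp [embed, add_smul, Finset.sum_add_distrib]
  map_smul c x := by simp [embed, mul_smul, Finset.smul_sum]

theorem finrank_eq_card_option (hd : d ≠ 0) :
    Module.finrank ℝ (E d) = Fintype.card (Option (Fin (d - 1))) := by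
  rw [finrank_euclideanSpace_fin, Fintype.card_option, Fintype.card_fin]
  omega

theorem IsAu.orthonormal_option_elim (h : IsAu u A) :
    Orthonormal ℝ fun j : Option (Fin (d - 1)) => j.elim u A := by
  obtain ⟨hu, hA, hAu⟩ := h
  refine ⟨fun j => ?_, fun i j hij => ?_⟩
  · cases j with
    | none => exact hu
    | some j => exact hA.1 j
  · rcases i with _ | i <;> rcases j with _ | j
    · exact (hij rfl).elim
    · exact inner_eq_zero_symm.1 (hAu j)
    · exact hAu i
    · exact hA.2 fun h => hij (congrArg some h)

theorem exists_isAu (hd : d ≠ 0) (hu : ‖u‖ = 1) : ∃ A : Fin (d - 1) → E d, IsAu u A := by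
  have hu' : Orthonormal ℝ (({none} : Set (Option (Fin (d - 1)))).domRestrict fun _ => u) :=
    ⟨fun _ => hu, fun i j hij => (hij (Subsingleton.elim i j)).elim⟩
  obtain ⟨b, hb⟩ :=
    hu'.exists_orthonormalBasis_extension_of_card_eq (finrank_eq_card_option hd)
  have hbu : b none = u := hb none rfl
  refine ⟨fun j => b (some j), hu, b.orthonormal.comp _ (Option.some_injective _), fun j => ?_⟩
  rw [← hbu]
  exact b.orthonormal.2 (Option.some_ne_none j)

theorem IsAu.embed_proj_add (h : IsAu u A) (hd : d ≠ 0) (y : E d) :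
    ⟪u, y⟫ • u + embed A (proj A y) = y := by
  let v : Option (Fin (d - 1)) → E d := fun j => j.elim u A
  have hv : Orthonormal ℝ v := h.orthonormal_option_elim
  obtain ⟨b, hb⟩ := (hv.comp _ Subtype.val_injective : Orthonormal ℝ (Set.univ.domRestrict v))
    |>.exists_orthonormalBasis_extension_of_card_eq (finrank_eq_card_option hd)
  have hy := b.sum_repr' y
  simp only [hb _ (Set.mem_univ _), Fintype.sum_option] at hy
  exact hy

/-- The least depth count `n λ*(X_u)` of a deepest point among all projections of the sample along a
line. -/
def minProjectedDepthCount (X : Fin n → E d) : ℕ :=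
  sInf {k | ∃ u A, IsAu u A ∧ k = maxDepthCount fun i => proj A (X i)}

theorem exists_isAu_minProjectedDepthCount_eq (hd : d ≠ 0) (X : Fin n → E d) :
    ∃ u A, IsAu u A ∧ minProjectedDepthCount X = maxDepthCount fun i => proj A (X i) := by
  obtain ⟨u, hu⟩ := exists_norm_eq_one hd
  obtain ⟨A, hA⟩ := exists_isAu hd hu
  exact Nat.sInf_mem (s := {k | ∃ u A, IsAu u A ∧ k = maxDepthCount fun i => proj A (X i)})
    ⟨_, u, A, hA, rfl⟩

theorem minProjectedDepthCount_le (h : IsAu u A) (X : Fin n → E d) :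
    minProjectedDepthCount X ≤ maxDepthCount fun i => proj A (X i) :=
  Nat.sInf_le ⟨u, A, h, rfl⟩

theorem one_le_minProjectedDepthCount (hd : d ≠ 0) (hn : n ≠ 0) (X : Fin n → E d) :
    1 ≤ minProjectedDepthCount X := by
  obtain ⟨u, A, -, h⟩ := exists_isAu_minProjectedDepthCount_eq hd X
  have : NeZero n := ⟨hn⟩
  exact h ▸ one_le_maxDepthCount _

theorem lambda0_eq_div (hd : 2 ≤ d) (X : Fin n → E d) :
    lambda0 X = minProjectedDepthCount X / n := by
  have hmax : ∀ A : Fin (d - 1) → E d,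
      maxDepth (fun i => proj A (X i)) = maxDepthCount (fun i => proj A (X i)) / n :=
    fun A => maxDepth_eq_div (by omega) _
  refine IsLeast.csInf_eq ⟨?_, ?_⟩
  · obtain ⟨u, A, hA, h⟩ := exists_isAu_minProjectedDepthCount_eq (by omega) X
    exact ⟨u, A, hA, by rw [hmax, h]⟩
  · rintro _ ⟨u, A, hA, rfl⟩
    rw [hmax]
    gcongr
    exact minProjectedDepthCount_le hA X

theorem hasDeepProjections_minProjectedDepthCount (hd : d ≠ 0) (X : Fin n → E d) :
    HasDeepProjections X (minProjectedDepthCount X) := by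
  intro u hu
  obtain ⟨A, hA⟩ := exists_isAu hd (norm_smul_inv_norm (𝕜 := ℝ) hu)
  obtain ⟨z, hz⟩ := le_maxDepthCount_iff.1 (minProjectedDepthCount_le hA X)
  refine ⟨embed A z, fun l hl => ?_⟩
  let l' : StrongDual ℝ (E (d - 1)) :=
    l.comp (LinearMap.toContinuousLinearMap (IsLinearMap.mk' _ (isLinearMap_embed A)))
  have hl' : ∀ y, l' (proj A y) = l y := fun y => by
    conv_rhs => rw [← hA.embed_proj_add hd y, map_add, map_smul, map_smul, hl]
    simp [l']
  refine (hz l').trans_eq ?_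
  simp only [halfspaceCount, hl']
  rfl

end Projections

section Breakdown

variable {d n : ℕ}

theorem not_breaksDown_of_lt {m : ℕ} (hd : d ≠ 0) (hn : n ≠ 0) {X : Fin n → E d}
    (hX : inGeneralPosition X) (hm : m < minProjectedDepthCount X) : ¬ breaksDown X m := by
  have : NeZero d := ⟨hd⟩
  have : NeZero n := ⟨hn⟩
  obtain ⟨R, hR⟩ := (hasDeepProjections_minProjectedDepthCount hd X).exists_norm_le
    hX.isInGeneralPosition ((Fintype.card_fin m).trans_lt hm)
  intro hbreak
  obtain ⟨Y, hY⟩ := hbreak (R + ‖TukeyMedian X‖)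
  rw [TukeyMedian_append hd hn] at hY
  refine hY.not_ge ((norm_sub_le _ _).trans ?_)
  gcongr
  exact hR Y _ (halfspaceMedian_mem_deepestRegion _)

theorem breaksDown_minProjectedDepthCount (hd : d ≠ 0) (hn : n ≠ 0) (X : Fin n → E d) :
    breaksDown X (minProjectedDepthCount X) := by
  obtain ⟨u, A, ⟨hu, -, hAu⟩, hk⟩ := exists_isAu_minProjectedDepthCount_eq hd X
  let π : E d →L[ℝ] E (d - 1) :=
    LinearMap.toContinuousLinearMap (IsLinearMap.mk' _ (isLinearMap_proj A))
  have hπ : π u = 0 := PiLp.ext hAu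
  have hu1 : innerSL ℝ u u = 1 := by simp [hu]
  have hempty : deepRegion (π ∘ X) (Fintype.card (Fin (minProjectedDepthCount X)) + 1) = ∅ := by
    rw [Fintype.card_fin, hk]
    exact deepRegion_maxDepthCount_add_one_eq_empty _
  have : NeZero (minProjectedDepthCount X) :=
    ⟨Nat.one_le_iff_ne_zero.1 (one_le_minProjectedDepthCount hd hn X)⟩
  intro C
  obtain ⟨r, hr⟩ := ((tendsto_apply_halfspaceMedian_sumElim_atTop hπ hu1 hempty).eventually_gt_atTop
    (C + ‖TukeyMedian X‖)).exists
  refine ⟨fun _ => r • u, ?_⟩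
  rw [TukeyMedian_append hd hn, ← add_lt_add_iff_right ‖TukeyMedian X‖]
  calc C + ‖TukeyMedian X‖ < ⟪u, halfspaceMedian (Sum.elim X fun _ => r • u)⟫ := hr
    _ ≤ ‖halfspaceMedian (Sum.elim X fun _ => r • u)‖ := by
      simpa [hu] using real_inner_le_norm u (halfspaceMedian (Sum.elim X fun _ => r • u))
    _ ≤ _ := norm_le_norm_sub_add _ _

theorem FSBP_eq_div (hd : d ≠ 0) (hn : n ≠ 0) {X : Fin n → E d} (hX : inGeneralPosition X) :
    FSBP X = minProjectedDepthCount X / (n + minProjectedDepthCount X) := by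
  refine IsLeast.csInf_eq ⟨⟨_, one_le_minProjectedDepthCount hd hn X,
    breaksDown_minProjectedDepthCount hd hn X, rfl⟩, ?_⟩
  rintro _ ⟨m, -, hbreak, rfl⟩
  have hle : (minProjectedDepthCount X : ℝ) ≤ m :=
    Nat.cast_le.2 (not_lt.1 fun h => not_breaksDown_of_lt hd hn hX h hbreak)
  have hn' : (0 : ℝ) < n := Nat.cast_pos.2 (Nat.pos_of_ne_zero hn)
  rw [div_le_div_iff₀ (add_pos_of_pos_of_nonneg hn' (Nat.cast_nonneg _))
    (add_pos_of_pos_of_nonneg hn' (Nat.cast_nonneg _))]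
  nlinarith

end Breakdown

/-- **Theorem 1.** If `X` is in general position in `ℝ^d` (`d ≥ 2`), then the
finite sample additional breakdown point of Tukey's halfspace median is
`ε(T*, Xⁿ) = λ₀ / (1 + λ₀)`, where `λ₀ = inf_{u ∈ S^{d-1}} λ*(X_uⁿ)`. -/
theorem theorem1 {d n : ℕ} (hd : 2 ≤ d) (hn : 1 ≤ n) (X : Fin n → E d)
    (hX : inGeneralPosition X) :
    FSBP X = lambda0 X / (1 + lambda0 X) := by
  have hn' : (n : ℝ) ≠ 0 := Nat.cast_ne_zero.2 (by omega)
  rw [FSBP_eq_div (by omega) (by omega) hX, lambda0_eq_div hd]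
  field_simp
end
end
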